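/- Every signed planar graph (G, σ) contains a matching M such that the Alon–Tarsi number of (G − M, σ) is at most 4, i.e., the signed graph polynomial P_{G−M,σ} has a non-vanishing monomial with all exponents at most 3. -/

import Mathlib

open MvPolynomial Finset

/- The graph polynomial `P_G = ∏_{uv ∈ E(G), u < v} (x_v - x_u)`. -/
open scoped Classical in
noncomputable def graphPoly {V : Type*} [Fintype V] [LinearOrder V]
    (G : SimpleGraph V) : MvPolynomial V ℝ :=
  ∏ p ∈ Finset.univ.filter (fun p : V × V => G.Adj p.1 p.2 ∧ p.1 < p.2),
    (X p.2 - X p.1)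

/- The signed graph polynomial `P_{G,σ} = ∏_{uv ∈ E(G), u < v} (x_v - σ(uv)·x_u)`. -/
open scoped Classical in
noncomputable def signedGraphPoly {V : Type*} [Fintype V] [LinearOrder V]
    (G : SimpleGraph V) (σ : Sym2 V → ℤ) : MvPolynomial V ℤ :=
  ∏ p ∈ Finset.univ.filter (fun p : V × V => G.Adj p.1 p.2 ∧ p.1 < p.2),
    (X p.2 - C (σ s(p.1, p.2)) * X p.1)

/- `H` is a minor of `G`: branch sets. -/
def SimpleGraph.IsMinor {W V : Type*} (H : SimpleGraph W) (G : SimpleGraph V) : Prop :=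
  ∃ f : W → Set V,
    (∀ w, (G.induce (f w)).Connected) ∧
    (∀ w₁ w₂, w₁ ≠ w₂ → Disjoint (f w₁) (f w₂)) ∧
    (∀ w₁ w₂, H.Adj w₁ w₂ → ∃ v₁ ∈ f w₁, ∃ v₂ ∈ f w₂, G.Adj v₁ v₂)

/- A graph is planar iff it has no `K₅` and no `K₃,₃` minor (Wagner's theorem). -/
def SimpleGraph.IsPlanar {V : Type*} (G : SimpleGraph V) : Prop :=
  ¬ SimpleGraph.IsMinor (completeGraph (Fin 5)) G ∧
  ¬ SimpleGraph.IsMinor (completeBipartiteGraph (Fin 3) (Fin 3)) G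



namespace ATM

/-- Reachability inside the set `D`. -/
def Rch {U : Type*} (H : SimpleGraph U) (D : Set U) : U → U → Prop :=
  Relation.ReflTransGen (fun p q => H.Adj p q ∧ p ∈ D ∧ q ∈ D)

/-- A set is connected (nonempty, all points reachable from a base point inside the set). -/
def Cn {U : Type*} (H : SimpleGraph U) (s : Set U) : Prop :=
  ∃ p ∈ s, ∀ q ∈ s, Rch H s p q

section basics
variable {U : Type*} {H : SimpleGraph U}

lemma Rch.symm {D : Set U} {x y : U} (h : Rch H D x y) : Rch H D y x := by
  induction h with
  | refl => exact Relation.ReflTransGen.refl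
  | tail _ hbc ih => exact Relation.ReflTransGen.head ⟨hbc.1.symm, hbc.2.2, hbc.2.1⟩ ih

lemma Rch.trans {D : Set U} {x y z : U} (h : Rch H D x y) (h' : Rch H D y z) : Rch H D x z :=
  Relation.ReflTransGen.trans h h'

lemma Rch.refl {D : Set U} (x : U) : Rch H D x x := Relation.ReflTransGen.refl

lemma Rch.mono {D E : Set U} (hDE : D ⊆ E) {x y : U} (h : Rch H D x y) : Rch H E x y := by
  induction h with
  | refl => exact Relation.ReflTransGen.refl
  | tail _ hbc ih => exact Relation.ReflTransGen.tail ih ⟨hbc.1, hDE hbc.2.1, hDE hbc.2.2⟩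

lemma Rch.step {D : Set U} {x y z : U} (h : Rch H D x y) (hy : y ∈ D) (hz : z ∈ D)
    (ha : H.Adj y z) : Rch H D x z :=
  Relation.ReflTransGen.tail h ⟨ha, hy, hz⟩

lemma Rch.single {D : Set U} {x y : U} (hy : x ∈ D) (hz : y ∈ D)
    (ha : H.Adj x y) : Rch H D x y := (Rch.refl x).step hy hz ha

/-- A set closed under steps contains everything reachable. -/
lemma Rch.closed {D : Set U} {x y : U} (h : Rch H D x y) (A : Set U) (hx : x ∈ A)
    (hA : ∀ p q, p ∈ A → p ∈ D → q ∈ D → H.Adj p q → q ∈ A) : y ∈ A := by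
  induction h with
  | refl => exact hx
  | tail _ hbc ih => exact hA _ _ ih hbc.2.1 hbc.2.2 hbc.1

lemma Rch.mem {D : Set U} {x y : U} (h : Rch H D x y) (hx : x ∈ D) : y ∈ D :=
  h.closed D hx (fun _ _ _ _ h _ => h)

/-- component of `x` in `D`. -/
def comp (H : SimpleGraph U) (D : Set U) (x : U) : Set U := {y | Rch H D x y}

lemma comp_cn {D : Set U} {x : U} : Cn H (comp H D x) := by
  refine ⟨x, Rch.refl x, fun q hq => ?_⟩
  have : Rch H D x q := hq
  clear hq
  induction this with
  | refl => exact Rch.refl x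
  | tail hab hbc ih =>
    exact ih.step hab (Rch.step hab hbc.2.1 hbc.2.2 hbc.1) hbc.1

lemma cn_connected {s : Set U} (h : Cn H s) : (H.induce s).Connected := by
  obtain ⟨p, hp, hq⟩ := h
  rw [SimpleGraph.connected_iff_exists_forall_reachable]
  refine ⟨⟨p, hp⟩, ?_⟩
  rintro ⟨q, hqs⟩
  have h := hq q hqs
  induction h with
  | refl => exact SimpleGraph.Reachable.refl _
  | tail hab hbc ih =>
    refine (ih hbc.2.1).trans (SimpleGraph.Adj.reachable ?_)
    simpa using hbc.1

lemma connected_rch {s : Set U} (h : (H.induce s).Connected) (x y : s) : Rch H s x y := by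
  have := h.preconnected x y
  obtain ⟨w⟩ := this
  induction w with
  | nil => exact Rch.refl _
  | cons ha _ ih =>
    exact (Rch.single (Subtype.property _) (Subtype.property _) (by simpa using ha)).trans ih

lemma Cn.singleton (x : U) : Cn H {x} := ⟨x, rfl, fun q hq => by
  rw [Set.mem_singleton_iff] at hq; subst hq; exact Rch.refl _⟩

lemma Cn.rch {s : Set U} (h : Cn H s) {x y : U} (hx : x ∈ s) (hy : y ∈ s) : Rch H s x y := by
  obtain ⟨p, hp, hq⟩ := h
  exact (hq x hx).symm.trans (hq y hy)

lemma Cn.insert {s : Set U} (h : Cn H s) {x y : U} (hy : y ∈ s) (ha : H.Adj x y) :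
    Cn H (insert x s) := by
  refine ⟨x, Set.mem_insert _ _, fun q hq => ?_⟩
  rcases hq with rfl | hq
  · exact Rch.refl _
  · exact (Rch.single (Set.mem_insert _ _) (Set.mem_insert_of_mem _ hy) ha).trans
      ((h.rch hy hq).mono (Set.subset_insert _ _))

lemma minor_transfer {U' T : Type*} (K : SimpleGraph T) (hK : ∀ w, ∃ w', K.Adj w w')
    (G' : SimpleGraph U') (φ : U' → Set U)
    (hconn : ∀ x, (∃ y, G'.Adj x y) → Cn H (φ x))
    (hdisj : ∀ x y, x ≠ y → (∃ z, G'.Adj x z) → (∃ z, G'.Adj y z) → Disjoint (φ x) (φ y))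
    (hadj : ∀ x y, G'.Adj x y → ∃ p ∈ φ x, ∃ q ∈ φ y, H.Adj p q)
    (hm : K.IsMinor G') : K.IsMinor H := by
  obtain ⟨f, hf1, hf2, hf3⟩ := hm
  have hni : ∀ w, ∀ x ∈ f w, ∃ y, G'.Adj x y := by
    intro w x hx
    obtain ⟨w', hw'⟩ := hK w
    obtain ⟨v1, hv1, v2, _, hv⟩ := hf3 w w' hw'
    have := connected_rch (hf1 w) ⟨x, hx⟩ ⟨v1, hv1⟩
    rcases Relation.ReflTransGen.cases_head this with h | ⟨c, hc, _⟩
    · simp only at h; subst h; exact ⟨v2, hv⟩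
    · exact ⟨c, hc.1⟩
  refine ⟨fun w => ⋃ x ∈ f w, φ x, ?_, ?_, ?_⟩
  · intro w
    apply cn_connected
    obtain ⟨⟨x0, hx0⟩⟩ := (hf1 w).nonempty
    obtain ⟨p, hp, -⟩ := hconn x0 (hni w x0 hx0)
    refine ⟨p, Set.mem_biUnion hx0 hp, ?_⟩
    have key : ∀ x, Rch G' (f w) x0 x → x ∈ f w → ∀ q ∈ φ x, Rch H (⋃ x ∈ f w, φ x) p q := by
      intro x h
      induction h with
      | refl =>
        intro _ q hq
        exact ((hconn x0 (hni w x0 hx0)).rch hp hq).mono (Set.subset_biUnion_of_mem (u := φ) hx0)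
      | @tail b c hab hbc ih =>
        intro hc q hq
        obtain ⟨r, hr, s, hs, hrs⟩ := hadj _ _ hbc.1
        refine ((ih hbc.2.1 r hr).step (Set.mem_biUnion hbc.2.1 hr)
          (Set.mem_biUnion hc hs) hrs).trans ?_
        exact ((hconn c (hni w c hc)).rch hs hq).mono (Set.subset_biUnion_of_mem (u := φ) hc)
    intro q hq
    simp only [Set.mem_iUnion] at hq
    obtain ⟨x, hx, hq⟩ := hq
    exact key x (connected_rch (hf1 w) ⟨x0, hx0⟩ ⟨x, hx⟩) hx q hq
  · intro w1 w2 hw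
    simp only [Set.disjoint_iUnion_left, Set.disjoint_iUnion_right]
    intro x hx y hy
    refine hdisj _ _ ?_ (hni _ _ (by assumption)) (hni _ _ (by assumption))
    rintro rfl
    exact Set.disjoint_left.1 (hf2 _ _ hw) (by assumption) (by assumption)
  · intro w1 w2 hw
    obtain ⟨x, hx, y, hy, hxy⟩ := hf3 w1 w2 hw
    obtain ⟨p, hp, q, hq, hpq⟩ := hadj x y hxy
    exact ⟨p, Set.mem_biUnion hx hp, q, Set.mem_biUnion hy hq, hpq⟩

lemma planar_transfer {U' : Type*} (hH : H.IsPlanar)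
    (G' : SimpleGraph U') (φ : U' → Set U)
    (hconn : ∀ x, (∃ y, G'.Adj x y) → Cn H (φ x))
    (hdisj : ∀ x y, x ≠ y → (∃ z, G'.Adj x z) → (∃ z, G'.Adj y z) → Disjoint (φ x) (φ y))
    (hadj : ∀ x y, G'.Adj x y → ∃ p ∈ φ x, ∃ q ∈ φ y, H.Adj p q) : G'.IsPlanar := by
  refine ⟨fun h => hH.1 (minor_transfer _ ?_ G' φ hconn hdisj hadj h),
    fun h => hH.2 (minor_transfer _ ?_ G' φ hconn hdisj hadj h)⟩
  · intro w
    exact ⟨w + 1, by revert w; simp⟩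
  · rintro (w | w)
    · exact ⟨Sum.inr 0, by simp⟩
    · exact ⟨Sum.inl 0, by simp⟩

lemma no_K5 (hH : H.IsPlanar) (s : Fin 5 → Set U) (hc : ∀ i, Cn H (s i))
    (hd : ∀ i j, i < j → Disjoint (s i) (s j))
    (ha : ∀ i j, i < j → ∃ p ∈ s i, ∃ q ∈ s j, H.Adj p q) : False := by
  refine hH.1 ⟨s, fun i => cn_connected (hc i), fun i j hij => ?_, fun i j hij => ?_⟩
  · rcases lt_or_gt_of_ne hij with h | h
    · exact hd i j h
    · exact (hd j i h).symm
  · have hij : i ≠ j := hij.ne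
    rcases lt_or_gt_of_ne hij with h | h
    · exact ha i j h
    · obtain ⟨p, hp, q, hq, h⟩ := ha j i h
      exact ⟨q, hq, p, hp, h.symm⟩

lemma no_K33 (hH : H.IsPlanar) (s t : Fin 3 → Set U) (hs : ∀ i, Cn H (s i))
    (ht : ∀ i, Cn H (t i))
    (hds : ∀ i j, i < j → Disjoint (s i) (s j))
    (hdt : ∀ i j, i < j → Disjoint (t i) (t j))
    (hst : ∀ i j, Disjoint (s i) (t j))
    (ha : ∀ i j, ∃ p ∈ s i, ∃ q ∈ t j, H.Adj p q) : False := by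
  have hds' : ∀ i j, i ≠ j → Disjoint (s i) (s j) := by
    intro i j hij
    rcases lt_or_gt_of_ne hij with h | h
    · exact hds i j h
    · exact (hds j i h).symm
  have hdt' : ∀ i j, i ≠ j → Disjoint (t i) (t j) := by
    intro i j hij
    rcases lt_or_gt_of_ne hij with h | h
    · exact hdt i j h
    · exact (hdt j i h).symm
  refine hH.2 ⟨Sum.elim s t, ?_, ?_, ?_⟩
  · rintro (i | i)
    · exact cn_connected (hs i)
    · exact cn_connected (ht i)
  · rintro (i | i) (j | j) hij
    · exact hds' i j (fun h => hij (by rw [h]))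
    · exact hst i j
    · exact (hst j i).symm
    · exact hdt' i j (fun h => hij (by rw [h]))
  · rintro (i | i) (j | j) hij
    · simp at hij
    · exact ha i j
    · obtain ⟨p, hp, q, hq, h⟩ := ha j i
      exact ⟨q, hq, p, hp, h.symm⟩
    · simp at hij

end basics

section cone
variable {V : Type*}

/-- the cone over `Γ`: a new vertex `none` joined to all of `B`. -/
def cone (Γ : SimpleGraph V) (B : Set V) : SimpleGraph (Option V) where
  Adj x y := match x, y with
    | some u, some v => Γ.Adj u v
    | none, some b => b ∈ B
    | some b, none => b ∈ B
    | none, none => False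
  symm := ⟨by
    rintro (_ | u) (_ | v) h
    · exact h
    · exact h
    · exact h
    · exact SimpleGraph.Adj.symm h⟩
  loopless := ⟨by
    rintro (_ | u) h
    · exact h
    · exact SimpleGraph.irrefl _ h⟩

variable {Γ : SimpleGraph V} {B : Set V}

@[simp] lemma cone_ss (u v : V) : (cone Γ B).Adj (some u) (some v) ↔ Γ.Adj u v := Iff.rfl
@[simp] lemma cone_ns (v : V) : (cone Γ B).Adj none (some v) ↔ v ∈ B := Iff.rfl
@[simp] lemma cone_sn (v : V) : (cone Γ B).Adj (some v) none ↔ v ∈ B := Iff.rfl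
@[simp] lemma cone_nn : (cone Γ B).Adj none none ↔ False := Iff.rfl

lemma Cn.some {s : Set V} (h : Cn Γ s) : Cn (cone Γ B) (some '' s) := by
  obtain ⟨p, hp, hq⟩ := h
  refine ⟨_, Set.mem_image_of_mem _ hp, ?_⟩
  rintro _ ⟨q, hqs, rfl⟩
  have h := hq q hqs
  clear hqs
  induction h with
  | refl => exact Rch.refl _
  | tail _ hbc ih =>
    exact ih.step (Set.mem_image_of_mem _ hbc.2.1) (Set.mem_image_of_mem _ hbc.2.2) hbc.1

/-- Two vertices connected inside `D` are adjacent or joined via a component of `E`,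
where `D ⊆ E ∪ {p, q}`. -/
lemma link {E D : Set V} {p q : V} (hp : p ∈ D) (hne : p ≠ q) 
    (hE : ∀ x ∈ D, x = p ∨ x = q ∨ x ∈ E)
    (h : Rch Γ D p q) : Γ.Adj p q ∨ ∃ x ∈ E, (∃ y ∈ comp Γ E x, Γ.Adj p y) ∧
      ∃ y ∈ comp Γ E x, Γ.Adj y q := by
  by_contra! hcon
  obtain ⟨h1, h2⟩ := hcon
  have := h.closed ({p} ∪ {y | y ≠ q ∧ ∃ x ∈ E, Γ.Adj p x ∧ Rch Γ E x y}) (Or.inl rfl) ?_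
  · rcases this with h | h
    · exact hne h.symm
    · exact h.1 rfl
  · rintro a b ha haD hbD hab
    rcases hE b hbD with rfl | rfl | hb
    · exact Or.inl rfl
    · exfalso
      rcases ha with rfl | ⟨_, x, hx, hpx, hxa⟩
      · exact h1 hab
      · exact h2 x hx ⟨x, Rch.refl x, hpx⟩ a hxa hab
    · by_cases hbq : b = q
      · exfalso
        subst hbq
        rcases ha with rfl | ⟨_, x, hx, hpx, hxa⟩
        · exact h1 hab
        · exact h2 x hx ⟨x, Rch.refl x, hpx⟩ a hxa hab
      rcases ha with rfl | ⟨_, x, hx, hpx, hxa⟩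
      · exact Or.inr ⟨hbq, b, hb, hab, Rch.refl b⟩
      · exact Or.inr ⟨hbq, x, hx, hpx, hxa.step (hxa.mem hx) hb hab⟩

/-- Joined form of `link`: a connector set. -/
def Lk (Γ : SimpleGraph V) (E : Set V) (p q : V) (L : Set V) : Prop :=
  (L = ∅ ∧ Γ.Adj p q) ∨ ∃ x ∈ E, L = comp Γ E x ∧ (∃ y ∈ L, Γ.Adj p y) ∧ ∃ y ∈ L, Γ.Adj y q

lemma Lk.sub {E : Set V} {p q : V} {L : Set V} (h : Lk Γ E p q L) : L ⊆ E := by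
  rcases h with ⟨rfl, _⟩ | ⟨x, hx, rfl, _⟩
  · exact Set.empty_subset _
  · exact fun y hy => Rch.mem hy hx

lemma Lk.cn {E : Set V} {p q : V} {L : Set V} (h : Lk Γ E p q L) : Cn Γ (insert p L) := by
  rcases h with ⟨rfl, _⟩ | ⟨x, hx, rfl, ⟨y, hy, hpy⟩, _⟩
  · simpa using Cn.singleton p
  · exact comp_cn.insert hy hpy

lemma Lk.adj {E : Set V} {p q : V} {L : Set V} (h : Lk Γ E p q L) :
    ∃ y ∈ insert p L, Γ.Adj y q := by
  rcases h with ⟨rfl, h⟩ | ⟨x, hx, rfl, _, ⟨y, hy, hyq⟩⟩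
  · exact ⟨p, by simp, h⟩
  · exact ⟨y, Set.mem_insert_of_mem _ hy, hyq⟩

lemma comp_eq {D : Set V} {x y z : V} (h1 : z ∈ comp Γ D x) (h2 : z ∈ comp Γ D y) :
    comp Γ D x = comp Γ D y := by
  have hxy : Rch Γ D x y := Rch.trans h1 (Rch.symm h2)
  ext w
  exact ⟨fun h => hxy.symm.trans h, fun h => hxy.trans h⟩

lemma lemA (hP : (cone Γ B).IsPlanar) (X C : Set V) (hX : Cn Γ X) (hXC : Disjoint X C)
    (hXB : ∃ x ∈ X, x ∈ B) (c1 c2 c3 : V) (h12 : c1 ≠ c2) (h13 : c1 ≠ c3) (h23 : c2 ≠ c3)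
    (hC1 : c1 ∈ C) (hC2 : c2 ∈ C) (hC3 : c3 ∈ C) (hB1 : c1 ∈ B) (hB2 : c2 ∈ B) (hB3 : c3 ∈ B)
    (ha1 : ∃ x ∈ X, Γ.Adj x c1) (ha2 : ∃ x ∈ X, Γ.Adj x c2) (ha3 : ∃ x ∈ X, Γ.Adj x c3)
    (r12 : Rch Γ (C \ {c3}) c1 c2) (r23 : Rch Γ (C \ {c1}) c2 c3)
    (r31 : Rch Γ (C \ {c2}) c3 c1) : False := by
  set E : Set V := C \ {c1, c2, c3} with hE
  have hEc1 : c1 ∉ E := by simp [hE]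
  have hEc2 : c2 ∉ E := by simp [hE]
  have hEc3 : c3 ∉ E := by simp [hE]
  have hEX : ∀ x ∈ X, x ∉ E := fun x hx h => Set.disjoint_left.1 hXC hx h.1
  have n1 : c1 ∉ X := fun h => Set.disjoint_left.1 hXC h hC1
  have n2 : c2 ∉ X := fun h => Set.disjoint_left.1 hXC h hC2
  have n3 : c3 ∉ X := fun h => Set.disjoint_left.1 hXC h hC3
  have mk : ∀ p q : V, (Γ.Adj p q ∨ ∃ x ∈ E, (∃ y ∈ comp Γ E x, Γ.Adj p y) ∧
      ∃ y ∈ comp Γ E x, Γ.Adj y q) → ∃ L, Lk Γ E p q L := by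
    rintro p q (h | ⟨x, hx, h⟩)
    · exact ⟨∅, Or.inl ⟨rfl, h⟩⟩
    · exact ⟨comp Γ E x, Or.inr ⟨x, hx, rfl, h⟩⟩
  -- no tripod
  have tri : ∀ x ∈ E, (∃ y ∈ comp Γ E x, Γ.Adj y c1) → (∃ y ∈ comp Γ E x, Γ.Adj y c2) →
      (∃ y ∈ comp Γ E x, Γ.Adj y c3) → False := by
    intro x hx t1 t2 t3
    have hsub : comp Γ E x ⊆ E := fun y hy => Rch.mem hy hx
    have hsX : ∀ y ∈ comp Γ E x, y ∉ X := fun y hy h => hEX y h (hsub hy)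
    have m1 : c1 ∉ comp Γ E x := fun h => hEc1 (hsub h)
    have m2 : c2 ∉ comp Γ E x := fun h => hEc2 (hsub h)
    have m3 : c3 ∉ comp Γ E x := fun h => hEc3 (hsub h)
    refine no_K33 hP ![{none}, some '' X, some '' (comp Γ E x)]
      ![some '' {c1}, some '' {c2}, some '' {c3}] ?_ ?_ ?_ ?_ ?_ ?_
    · intro i
      fin_cases i
      · exact Cn.singleton _
      · exact hX.some
      · exact comp_cn.some
    · intro i
      fin_cases i <;> exact (Cn.singleton _).some
    · intro i j hij
      fin_cases i <;> fin_cases j <;> simp at hij ⊢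
      rw [Set.disjoint_image_iff (Option.some_injective _)]
      exact Set.disjoint_left.2 fun a ha hb => hsX a hb ha
    · intro i j hij
      fin_cases i <;> fin_cases j <;> simp at hij ⊢ <;> tauto
    · intro i j
      fin_cases i <;> fin_cases j <;> simp <;> tauto
    · intro i j
      fin_cases i <;> fin_cases j <;> simp <;> assumption
  obtain ⟨L1, hL1⟩ := mk c1 c2 (link (D := C \ {c3}) ⟨hC1, h13⟩ h12 (by
    intro x hx; simp only [hE, Set.mem_sdiff, Set.mem_insert_iff, Set.mem_singleton_iff] at hx ⊢
    tauto) r12)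
  obtain ⟨L2, hL2⟩ := mk c2 c3 (link (D := C \ {c1}) ⟨hC2, h12.symm⟩ h23 (by
    intro x hx; simp only [hE, Set.mem_sdiff, Set.mem_insert_iff, Set.mem_singleton_iff] at hx ⊢
    tauto) r23)
  obtain ⟨L3, hL3⟩ := mk c3 c1 (link (D := C \ {c2}) ⟨hC3, h23.symm⟩ h13.symm (by
    intro x hx; simp only [hE, Set.mem_sdiff, Set.mem_insert_iff, Set.mem_singleton_iff] at hx ⊢
    tauto) r31)
  have dis : ∀ p q r L L', Lk Γ E p q L → Lk Γ E q r L' →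
      (∀ x ∈ E, (∃ y ∈ comp Γ E x, Γ.Adj y p) → (∃ y ∈ comp Γ E x, Γ.Adj y q) →
      (∃ y ∈ comp Γ E x, Γ.Adj y r) → False) → Disjoint L L' := by
    intro p q r L L' h h' hno
    rw [Set.disjoint_left]
    intro z hz hz'
    rcases h with ⟨rfl, _⟩ | ⟨x, hx, rfl, ⟨y, hy, hpy⟩, hq⟩
    · exact hz
    rcases h' with ⟨rfl, _⟩ | ⟨x', hx', rfl, _, hr⟩
    · exact hz'
    rw [← comp_eq hz hz'] at hr
    exact hno x hx ⟨y, hy, hpy.symm⟩ hq hr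
  have d12 : Disjoint L1 L2 := dis _ _ _ _ _ hL1 hL2 tri
  have d23 : Disjoint L2 L3 := dis _ _ _ _ _ hL2 hL3 (fun x hx a b c => tri x hx c a b)
  have d31 : Disjoint L3 L1 := dis _ _ _ _ _ hL3 hL1 (fun x hx a b c => tri x hx b c a)
  have s1 := hL1.sub
  have s2 := hL2.sub
  have s3 := hL3.sub
  have big : ∀ (c c' : V) (L L' : Set V), c ≠ c' → c ∉ E → c' ∉ E → L ⊆ E → L' ⊆ E →
      Disjoint L L' → Disjoint (some '' insert c L) (some '' insert c' L') := by
    intro c c' L L' h1 h2 h3 h4 h5 h6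
    rw [Set.disjoint_image_iff (Option.some_injective _), Set.disjoint_left]
    rintro a (rfl | ha) (rfl | hb)
    · exact h1 rfl
    · exact h2 (h5 hb)
    · exact h3 (h4 ha)
    · exact Set.disjoint_left.1 h6 ha hb
  have bigX : ∀ (c : V) (L : Set V), c ∉ X → L ⊆ E → Disjoint (some '' X) (some '' insert c L) := by
    intro c L h1 h2
    rw [Set.disjoint_image_iff (Option.some_injective _), Set.disjoint_left]
    rintro a ha (rfl | hb)
    · exact h1 ha
    · exact hEX a ha (h2 hb)
  refine no_K5 hP ![{none}, some '' X, some '' (insert c1 L1), some '' (insert c2 L2),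
    some '' (insert c3 L3)] ?_ ?_ ?_
  · intro i
    fin_cases i
    · exact Cn.singleton _
    · exact hX.some
    · exact hL1.cn.some
    · exact hL2.cn.some
    · exact hL3.cn.some
  · intro i j hij
    fin_cases i <;> fin_cases j <;> first | (exfalso; revert hij; decide) | skip
    · simp
    · simp
    · simp
    · simp
    · exact bigX _ _ n1 s1
    · exact bigX _ _ n2 s2
    · exact bigX _ _ n3 s3
    · exact big _ _ _ _ h12 hEc1 hEc2 s1 s2 d12
    · exact big _ _ _ _ h13 hEc1 hEc3 s1 s3 d31.symm
    · exact big _ _ _ _ h23 hEc2 hEc3 s2 s3 d23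
  · have toX : ∀ (c : V) (L : Set V), (∃ x ∈ X, Γ.Adj x c) →
        ∃ p ∈ some '' X, ∃ q ∈ some '' (insert c L), (cone Γ B).Adj p q := by
      rintro c L ⟨x, hx, h⟩
      exact ⟨_, ⟨x, hx, rfl⟩, _, ⟨c, by simp, rfl⟩, h⟩
    have toN : ∀ (c : V) (L : Set V), c ∈ B →
        ∃ p ∈ ({none} : Set (Option V)), ∃ q ∈ some '' (insert c L), (cone Γ B).Adj p q := by
      rintro c L hc
      exact ⟨_, rfl, _, ⟨c, by simp, rfl⟩, hc⟩
    have toC : ∀ (p q : V) (L L' : Set V), (∃ y ∈ insert p L, Γ.Adj y q) →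
        ∃ a ∈ some '' (insert p L), ∃ b ∈ some '' (insert q L'), (cone Γ B).Adj a b := by
      rintro p q L L' ⟨y, hy, h⟩
      exact ⟨_, ⟨y, hy, rfl⟩, _, ⟨q, by simp, rfl⟩, h⟩
    intro i j hij
    fin_cases i <;> fin_cases j <;> first | (exfalso; revert hij; decide) | skip
    · obtain ⟨x, hx, hb⟩ := hXB
      exact ⟨_, rfl, _, ⟨x, hx, rfl⟩, hb⟩
    · exact toN _ _ hB1
    · exact toN _ _ hB2
    · exact toN _ _ hB3
    · exact toX _ _ ha1
    · exact toX _ _ ha2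
    · exact toX _ _ ha3
    · exact toC _ _ _ _ hL1.adj
    · obtain ⟨a, ha, b, hb, h⟩ := toC _ _ L3 L1 hL3.adj
      exact ⟨b, hb, a, ha, h.symm⟩
    · exact toC _ _ _ _ hL2.adj

end cone

section structural
variable {V : Type*}

/-- In a connected two-regular piece, removing a vertex does not disconnect. -/
lemma cycle_rch [Fintype V] (Γ : SimpleGraph V) (C : Set V)
    (hC : ∀ x ∈ C, ∀ y ∈ C, Rch Γ C x y)
    (h2 : ∀ x ∈ C, {y | y ∈ C ∧ Γ.Adj x y}.ncard = 2) (d e f : V) (hd : d ∈ C) (he : e ∈ C)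
    (hf : f ∈ C) (hde : d ≠ e) (hdf : d ≠ f) : Rch Γ (C \ {d}) e f := by
  classical
  by_contra hcon
  obtain ⟨p, q, hpq, hdn⟩ := Set.ncard_eq_two.1 (h2 d hd)
  have hp : p ∈ C ∧ Γ.Adj d p := by
    have : p ∈ ({p, q} : Set V) := by simp
    rw [← hdn] at this; exact this
  have hq : q ∈ C ∧ Γ.Adj d q := by
    have : q ∈ ({p, q} : Set V) := by simp
    rw [← hdn] at this; exact this
  have hdn' : ∀ y ∈ C, Γ.Adj d y → y = p ∨ y = q := by
    intro y hy hdy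
    have : y ∈ {y | y ∈ C ∧ Γ.Adj d y} := ⟨hy, hdy⟩
    rw [hdn] at this; simpa using this
  set X := comp Γ (C \ {d}) e with hX
  have heD : e ∈ C \ {d} := ⟨he, hde.symm⟩
  have hXD : ∀ y ∈ X, y ∈ C \ {d} := fun y hy => Rch.mem hy heD
  have hXcl : ∀ x ∈ X, ∀ y ∈ C, y ≠ d → Γ.Adj x y → y ∈ X := by
    intro x hx y hy hyd hxy
    exact Rch.step hx (hXD x hx) ⟨hy, hyd⟩ hxy
  have heX : e ∈ X := Rch.refl e
  have hfX : f ∉ X := hcon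
  -- some neighbour of d in X
  have n1 : p ∈ X ∨ q ∈ X := by
    by_contra hn
    push Not at hn
    have := (hC e he d hd).closed X heX (by
      intro a b ha haC hb hab
      by_cases hbd : b = d
      · subst hbd
        rcases hdn' a haC hab.symm with rfl | rfl
        · exact absurd ha hn.1
        · exact absurd ha hn.2
      · exact hXcl a ha b hb hbd hab)
    exact (hXD d this).2 rfl
  have n2 : ¬ (p ∈ X ∧ q ∈ X) := by
    rintro ⟨hpX, hqX⟩
    have := (hC f hf e he).closed (C \ (X ∪ {d})) ⟨hf, by
        rintro (h | h)
        · exact hfX h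
        · exact hdf h.symm⟩ (by
      rintro a b ⟨_, ha⟩ haC hb hab
      refine ⟨hb, ?_⟩
      rintro (h | h)
      · exact ha (Or.inl (hXcl b h a haC (fun h => ha (Or.inr h)) hab.symm))
      · have : b = d := h
        subst this
        rcases hdn' a haC hab.symm with rfl | rfl
        · exact ha (Or.inl hpX)
        · exact ha (Or.inl hqX))
    exact this.2 (Or.inl heX)
  -- exactly one neighbour, parity
  have key : ∀ p, Γ.Adj d p → p ∈ X → (∀ y ∈ X, Γ.Adj d y → y = p) → False := by
    intro p hdp hpX hu
    let K : SimpleGraph V := ⟨fun x y => Γ.Adj x y ∧ x ∈ X ∧ y ∈ X,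
      ⟨fun x y h => ⟨h.1.symm, h.2.2, h.2.1⟩⟩, ⟨fun x h => SimpleGraph.irrefl _ h.1⟩⟩
    have hK : ∀ x y, K.Adj x y ↔ Γ.Adj x y ∧ x ∈ X ∧ y ∈ X := fun _ _ => Iff.rfl
    have hdeg : ∀ x, K.degree x = {y | K.Adj x y}.ncard := by
      intro x
      rw [← SimpleGraph.card_neighborFinset_eq_degree, ← Set.ncard_coe_finset]
      congr 1
      ext y; simp
    have hodd : (Finset.univ.filter fun x => Odd (K.degree x)) = {p} := by
      ext x
      simp only [Finset.mem_filter, Finset.mem_univ, true_and, Finset.mem_singleton]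
      rw [hdeg]
      by_cases hx : x ∈ X
      · by_cases hxp : x = p
        · subst hxp
          have e1 : {y | y ∈ C ∧ Γ.Adj x y} = insert d {y | K.Adj x y} := by
            ext y
            simp only [Set.mem_ofPred_eq, Set.mem_insert_iff, hK]
            constructor
            · rintro ⟨h1, h2⟩
              by_cases hy : y = d
              · exact Or.inl hy
              · exact Or.inr ⟨h2, hx, hXcl x hx y h1 hy h2⟩
            · rintro (rfl | h)
              · exact ⟨hd, hdp.symm⟩
              · exact ⟨(hXD y h.2.2).1, h.1⟩
          have e2 := h2 x (hXD x hx).1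
          rw [e1, Set.ncard_insert_of_notMem (fun h => (hXD d h.2.2).2 rfl)] at e2
          have e3 : {y | K.Adj x y}.ncard = 1 := by omega
          simp [e3]
        · have e1 : {y | y ∈ C ∧ Γ.Adj x y} = {y | K.Adj x y} := by
            ext y
            simp only [Set.mem_ofPred_eq, hK]
            constructor
            · rintro ⟨h1, h2⟩
              refine ⟨h2, hx, hXcl x hx y h1 ?_ h2⟩
              rintro rfl
              exact hxp (hu x hx h2.symm)
            · rintro h
              exact ⟨(hXD y h.2.2).1, h.1⟩
          rw [← e1, h2 x (hXD x hx).1]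
          simp only [hxp, iff_false]
          decide
      · have e1 : {y | K.Adj x y} = ∅ := by
          ext y
          simp only [Set.mem_ofPred_eq, hK, Set.mem_empty_iff_false, iff_false]
          tauto
        rw [e1]
        simp only [Set.ncard_empty]
        constructor
        · intro h; exact absurd h (by decide)
        · rintro rfl; exact absurd hpX hx
    have := K.even_card_odd_degree_vertices
    rw [hodd] at this
    simp at this
  rcases n1 with h | h
  · refine key p hp.2 h fun y hy hdy => ?_
    rcases hdn' y (hXD y hy).1 hdy with rfl | rfl
    · rfl
    · exact absurd ⟨h, hy⟩ n2
  · refine key q hq.2 h fun y hy hdy => ?_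
    rcases hdn' y (hXD y hy).1 hdy with rfl | rfl
    · exact absurd ⟨hy, h⟩ n2
    · rfl

lemma structure_lemma [Fintype V] (Γ : SimpleGraph V) (W B R : Set V) (hBW : B ⊆ W) (hRB : R ⊆ B)
    (hP : (cone Γ B).IsPlanar) (hR : R.Nonempty) (hBR : (B \ R).Nonempty)
    (hN : ∀ S ⊆ B, S.ncard ≤ 2 → ∀ x ∈ W \ S, ∀ y ∈ W \ S, Rch Γ (W \ S) x y) :
    ∃ v ∈ B \ R, {y | y ∈ B \ R ∧ Γ.Adj v y}.ncard ≤ 1 ∧ {y | y ∈ B ∧ Γ.Adj v y}.ncard ≤ 2 := by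
  classical
  -- maximum degree at most two
  have maxdeg : ∀ b ∈ B, {y | y ∈ B ∧ Γ.Adj b y}.ncard ≤ 2 := by
    intro b hb
    by_contra hcon
    push Not at hcon
    obtain ⟨c1, c2, c3, hc1, hc2, hc3, h12, h13, h23⟩ := (Set.two_lt_ncard_iff (Set.toFinite _)).1 hcon
    have ne : ∀ {c}, c ∈ {y | y ∈ B ∧ Γ.Adj b y} → c ≠ b := by
      rintro c hc rfl; exact SimpleGraph.irrefl _ hc.2
    have rr : ∀ x y z, x ∈ {y | y ∈ B ∧ Γ.Adj b y} → y ∈ {y | y ∈ B ∧ Γ.Adj b y} →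
        z ∈ {y | y ∈ B ∧ Γ.Adj b y} → x ≠ z → y ≠ z → Rch Γ ((W \ {b}) \ {z}) x y := by
      intro x y z hx hy hz hxz hyz
      have hS : (W \ {b}) \ {z} = W \ {b, z} := by
        ext t; simp only [Set.mem_sdiff, Set.mem_insert_iff, Set.mem_singleton_iff]; tauto
      rw [hS]
      refine hN {b, z} ?_ ((Set.ncard_insert_le _ _).trans (by simp)) x ⟨hBW hx.1, ?_⟩ y ⟨hBW hy.1, ?_⟩
      · rintro t (rfl | rfl)
        · exact hb
        · exact hz.1
      · rintro (h | h)
        · exact ne hx h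
        · exact hxz h
      · rintro (h | h)
        · exact ne hy h
        · exact hyz h
    exact lemA hP {b} (W \ {b}) (Cn.singleton b) (by simp) ⟨b, rfl, hb⟩ c1 c2 c3 h12 h13 h23
      ⟨hBW hc1.1, ne hc1⟩ ⟨hBW hc2.1, ne hc2⟩ ⟨hBW hc3.1, ne hc3⟩ hc1.1 hc2.1 hc3.1
      ⟨b, rfl, hc1.2⟩ ⟨b, rfl, hc2.2⟩ ⟨b, rfl, hc3.2⟩
      (rr _ _ _ hc1 hc2 hc3 h13 h23) (rr _ _ _ hc2 hc3 hc1 h12.symm h13.symm)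
      (rr _ _ _ hc3 hc1 hc2 h23.symm h12)
  by_contra hcon
  push Not at hcon
  have hbig : ∀ v ∈ B \ R, {y | y ∈ B \ R ∧ Γ.Adj v y} = {y | y ∈ B ∧ Γ.Adj v y} ∧
      {y | y ∈ B ∧ Γ.Adj v y}.ncard = 2 := by
    intro v hv
    have h1 := maxdeg v hv.1
    have h2 : 1 < {y | y ∈ B \ R ∧ Γ.Adj v y}.ncard := by
      by_contra h
      push Not at h
      exact absurd h1 (not_le.2 (hcon v hv h))
    have hsub : {y | y ∈ B \ R ∧ Γ.Adj v y} ⊆ {y | y ∈ B ∧ Γ.Adj v y} :=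
      fun y hy => ⟨hy.1.1, hy.2⟩
    have h3 := Set.ncard_le_ncard hsub (Set.toFinite _)
    exact ⟨Set.eq_of_subset_of_ncard_le hsub (by omega) (Set.toFinite _), by omega⟩
  obtain ⟨v0, hv0⟩ := hBR
  obtain ⟨r, hr⟩ := hR
  set C := comp Γ (B \ R) v0 with hCdef
  have hCsub : ∀ y ∈ C, y ∈ B \ R := fun y hy => Rch.mem hy hv0
  have hCn : Cn Γ C := comp_cn
  have hCadj : ∀ x ∈ C, {y | y ∈ C ∧ Γ.Adj x y} = {y | y ∈ B ∧ Γ.Adj x y} := by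
    intro x hx
    rw [← (hbig x (hCsub x hx)).1]
    ext y
    constructor
    · rintro ⟨h1, h2⟩; exact ⟨hCsub y h1, h2⟩
    · rintro ⟨h1, h2⟩; exact ⟨Rch.step hx (hCsub x hx) h1 h2, h2⟩
  have hC2 : ∀ x ∈ C, {y | y ∈ C ∧ Γ.Adj x y}.ncard = 2 := by
    intro x hx
    rw [hCadj x hx]; exact (hbig x (hCsub x hx)).2
  have hC3 : 2 < C.ncard := by
    have h0 : v0 ∈ C := Rch.refl v0
    have hs : insert v0 {y | y ∈ C ∧ Γ.Adj v0 y} ⊆ C := by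
      rintro y (rfl | hy)
      · exact h0
      · exact hy.1
    have h1 := Set.ncard_le_ncard hs (Set.toFinite _)
    rw [Set.ncard_insert_of_notMem (fun h => SimpleGraph.irrefl _ h.2), hC2 v0 h0] at h1
    omega
  have hrC : r ∉ C := fun h => (hCsub r h).2 hr
  have hrD : r ∈ W \ C := ⟨hBW (hRB hr), hrC⟩
  set D := comp Γ (W \ C) r with hDdef
  have hDsub : ∀ y ∈ D, y ∈ W \ C := fun y hy => Rch.mem hy hrD
  have hS : 2 < {c | c ∈ C ∧ ∃ x ∈ D, Γ.Adj x c}.ncard := by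
    by_contra hle
    push Not at hle
    set S := {c | c ∈ C ∧ ∃ x ∈ D, Γ.Adj x c} with hSdef
    obtain ⟨t, htC, htS⟩ : ∃ t ∈ C, t ∉ S := by
      by_contra! h
      have := Set.ncard_le_ncard h (Set.toFinite _)
      omega
    have hrt := hN S (fun c hc => (hCsub c hc.1).1) hle r ⟨hrD.1, fun h => hrC h.1⟩ t
      ⟨hBW (hCsub t htC).1, htS⟩
    have := hrt.closed D (Rch.refl r) (by
      intro p q hp hpW hqW hpq
      by_cases hqC : q ∈ C
      · exact absurd ⟨hqC, p, hp, hpq⟩ hqW.2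
      · exact Rch.step hp (hDsub p hp) ⟨hqW.1, hqC⟩ hpq)
    exact (hDsub t this).2 htC
  obtain ⟨c1, c2, c3, hc1, hc2, hc3, h12, h13, h23⟩ := (Set.two_lt_ncard_iff (Set.toFinite _)).1 hS
  have hCC : ∀ x ∈ C, ∀ y ∈ C, Rch Γ C x y := fun x hx y hy => hCn.rch hx hy
  exact lemA hP D C comp_cn (Set.disjoint_left.2 fun a ha => (hDsub a ha).2)
    ⟨r, Rch.refl r, hRB hr⟩ c1 c2 c3 h12 h13 h23 hc1.1 hc2.1 hc3.1 (hCsub _ hc1.1).1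
    (hCsub _ hc2.1).1 (hCsub _ hc3.1).1 hc1.2 hc2.2 hc3.2
    (cycle_rch Γ C hCC hC2 c3 c1 c2 hc3.1 hc1.1 hc2.1 h13.symm h23.symm)
    (cycle_rch Γ C hCC hC2 c1 c2 c3 hc1.1 hc2.1 hc3.1 h12 h13)
    (cycle_rch Γ C hCC hC2 c2 c3 c1 hc2.1 hc3.1 hc1.1 h23 h12.symm)

end structural

section poly
set_option linter.unusedSectionVars false
variable {V : Type*} [Fintype V] [LinearOrder V]

open scoped Classical in
lemma poly_edge (σ : Sym2 V → ℤ) (hσ : ∀ e, σ e = 1 ∨ σ e = -1) (H H' : SimpleGraph V) (h t : V)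
    (hne : h ≠ t) (hH : ¬ H.Adj h t)
    (hH' : ∀ x y, H'.Adj x y ↔ H.Adj x y ∨ (x = h ∧ y = t) ∨ (x = t ∧ y = h)) :
    ∃ α β : ℤ, α ≠ 0 ∧ β ≠ 0 ∧
      signedGraphPoly H' σ = signedGraphPoly H σ * (C α * X h + C β * X t) := by
  have hs : ∀ e, σ e ≠ 0 := by
    intro e; rcases hσ e with h | h <;> rw [h] <;> decide
  have main : ∀ a b : V, a < b → ¬ H.Adj a b →
      (∀ x y, H'.Adj x y ↔ H.Adj x y ∨ (x = a ∧ y = b) ∨ (x = b ∧ y = a)) →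
      signedGraphPoly H' σ = (X b - C (σ s(a, b)) * X a) * signedGraphPoly H σ := by
    intro a b hab hn hadj
    unfold signedGraphPoly
    have : (Finset.univ.filter (fun p : V × V => H'.Adj p.1 p.2 ∧ p.1 < p.2)) =
        insert (a, b) (Finset.univ.filter (fun p : V × V => H.Adj p.1 p.2 ∧ p.1 < p.2)) := by
      ext ⟨x, y⟩
      simp only [Finset.mem_filter, Finset.mem_univ, true_and, Finset.mem_insert, hadj,
        Prod.mk.injEq]
      constructor
      · rintro ⟨h | h | h, hlt⟩
        · exact Or.inr ⟨h, hlt⟩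
        · exact Or.inl h
        · exact absurd hab (by rw [← h.1, ← h.2]; exact hlt.asymm)
      · rintro (⟨rfl, rfl⟩ | h)
        · exact ⟨Or.inr (Or.inl ⟨rfl, rfl⟩), hab⟩
        · exact ⟨Or.inl h.1, h.2⟩
    rw [this, Finset.prod_insert (by simp [hn])]
  rcases lt_or_gt_of_ne hne with hlt | hlt
  · refine ⟨-σ s(h, t), 1, neg_ne_zero.2 (hs _), one_ne_zero, ?_⟩
    rw [main h t hlt hH hH']
    simp only [map_neg, map_one]
    ring
  · refine ⟨1, -σ s(t, h), one_ne_zero, neg_ne_zero.2 (hs _), ?_⟩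
    rw [main t h hlt (fun h => hH h.symm) (fun x y => by rw [hH']; tauto)]
    simp only [map_neg, map_one]
    ring

lemma coeff_lin (F : MvPolynomial V ℤ) (α β : ℤ) (h t : V) (ν : V →₀ ℕ) :
    coeff ν (F * (C α * X h + C β * X t)) =
      α * (if ν h ≠ 0 then coeff (ν - Finsupp.single h 1) F else 0) +
      β * (if ν t ≠ 0 then coeff (ν - Finsupp.single t 1) F else 0) := by
  classical
  have : F * (C α * X h + C β * X t) = C α * (F * X h) + C β * (F * X t) := by ring
  rw [this, coeff_add, coeff_C_mul, coeff_C_mul, coeff_mul_X', coeff_mul_X']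
  simp only [Finsupp.mem_support_iff]

lemma coeff_lin_one (F : MvPolynomial V ℤ) (α β : ℤ) (h t : V) (hne : h ≠ t) (μ : V →₀ ℕ)
    (ht : μ t = 0) :
    coeff (μ + Finsupp.single h 1) (F * (C α * X h + C β * X t)) = α * coeff μ F := by
  rw [coeff_lin, if_pos (by simp), if_neg (by simp [ht, hne])]
  simp

/-- add to `H` all edges from `v` to `Z`. -/
def star (H : SimpleGraph V) (v : V) (Z : Finset V) : SimpleGraph V where
  Adj x y := H.Adj x y ∨ (x = v ∧ y ∈ Z ∧ y ≠ v) ∨ (y = v ∧ x ∈ Z ∧ x ≠ v)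
  symm := ⟨by
    rintro x y (h | h | h)
    · exact Or.inl h.symm
    · exact Or.inr (Or.inr h)
    · exact Or.inr (Or.inl h)⟩
  loopless := ⟨by
    rintro x (h | h | h)
    · exact SimpleGraph.irrefl _ h
    · exact h.2.2 h.1
    · exact h.2.2 h.1⟩

lemma star_adj (H : SimpleGraph V) (v : V) (Z : Finset V) (x y : V) : (star H v Z).Adj x y ↔
    H.Adj x y ∨ (x = v ∧ y ∈ Z ∧ y ≠ v) ∨ (y = v ∧ x ∈ Z ∧ x ≠ v) := Iff.rfl

lemma star_empty (H : SimpleGraph V) (v : V) : star H v ∅ = H := by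
  ext x y; simp [star_adj]

lemma poly_star_insert (σ : Sym2 V → ℤ) (hσ : ∀ e, σ e = 1 ∨ σ e = -1) (H : SimpleGraph V)
    (v z : V) (Z : Finset V) (hz : z ∉ Z) (hzv : z ≠ v) (hH : ¬ H.Adj v z) :
    ∃ α β : ℤ, α ≠ 0 ∧ β ≠ 0 ∧
      signedGraphPoly (star H v (insert z Z)) σ =
        signedGraphPoly (star H v Z) σ * (C α * X v + C β * X z) := by
  refine poly_edge σ hσ _ _ v z hzv.symm ?_ ?_
  · rw [star_adj]; simp [hH, hz, hzv]
  · intro x y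
    rw [star_adj, star_adj]
    simp only [Finset.mem_insert]
    constructor
    · rintro (h | ⟨h1, (h | h), h3⟩ | ⟨h1, (h | h), h3⟩) <;> tauto
    · rintro ((h | h | h) | ⟨h1, h2⟩ | ⟨h1, h2⟩)
      · tauto
      · tauto
      · tauto
      · subst h1 h2; tauto
      · subst h1 h2; tauto

/-- sum of unit exponents over `Z`. -/
noncomputable def ind (Z : Finset V) : V →₀ ℕ := ∑ z ∈ Z, Finsupp.single z 1

lemma ind_insert (Z : Finset V) (z : V) (hz : z ∉ Z) :
    ind (insert z Z) = ind Z + Finsupp.single z 1 := by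
  unfold ind; rw [Finset.sum_insert hz, add_comm]

lemma ind_apply (Z : Finset V) (x : V) : ind Z x = if x ∈ Z then 1 else 0 := by
  unfold ind
  simp [Finsupp.finsetSum_apply, Finsupp.single_apply]

lemma star_out (σ : Sym2 V → ℤ) (hσ : ∀ e, σ e = 1 ∨ σ e = -1) (H : SimpleGraph V)
    (v : V) (Z : Finset V) (hZ : ∀ z ∈ Z, z ≠ v ∧ ¬ H.Adj v z) (μ : V →₀ ℕ) (hv : μ v = 0) :
    coeff (μ + ind Z) (signedGraphPoly (star H v Z) σ) ≠ 0 ↔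
      coeff μ (signedGraphPoly H σ) ≠ 0 := by
  induction Z using Finset.induction_on with
  | empty => simp [ind, star_empty]
  | insert z Z hz ih =>
    have hZ' : ∀ z ∈ Z, z ≠ v ∧ ¬ H.Adj v z := fun x hx => hZ x (Finset.mem_insert_of_mem hx)
    obtain ⟨h1, h2⟩ := hZ z (Finset.mem_insert_self _ _)
    obtain ⟨α, β, hα, hβ, h⟩ := poly_star_insert σ hσ H v z Z hz h1 h2
    rw [h, ind_insert _ _ hz, ← add_assoc, add_comm (C α * X v), coeff_lin_one _ _ _ _ _ h1,
      ← ih hZ']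
    · simp [hβ]
    · rw [Finsupp.add_apply, hv, ind_apply, if_neg (fun hv => (hZ' v hv).1 rfl)]

lemma star_in (σ : Sym2 V → ℤ) (hσ : ∀ e, σ e = 1 ∨ σ e = -1) (H : SimpleGraph V)
    (v : V) (Z : Finset V) (hZ : ∀ z ∈ Z, z ≠ v ∧ ¬ H.Adj v z) (μ : V →₀ ℕ)
    (hμ : ∀ z ∈ Z, μ z = 0) :
    coeff (μ + Finsupp.single v Z.card) (signedGraphPoly (star H v Z) σ) ≠ 0 ↔
      coeff μ (signedGraphPoly H σ) ≠ 0 := by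
  induction Z using Finset.induction_on with
  | empty => simp [star_empty]
  | insert z Z hz ih =>
    have hZ' : ∀ z ∈ Z, z ≠ v ∧ ¬ H.Adj v z := fun x hx => hZ x (Finset.mem_insert_of_mem hx)
    obtain ⟨h1, h2⟩ := hZ z (Finset.mem_insert_self _ _)
    obtain ⟨α, β, hα, hβ, h⟩ := poly_star_insert σ hσ H v z Z hz h1 h2
    rw [h, Finset.card_insert_of_notMem hz, Finsupp.single_add, ← add_assoc,
      coeff_lin_one _ _ _ _ _ h1.symm, ← ih hZ' (fun x hx => hμ x (Finset.mem_insert_of_mem hx))]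
    · simp [hα]
    · simp [hμ z (Finset.mem_insert_self _ _), h1.symm]

lemma poly_no_var (σ : Sym2 V → ℤ) (H : SimpleGraph V) (v : V) (hv : ∀ u, ¬ H.Adj v u)
    (ν : V →₀ ℕ) (hν : ν v ≠ 0) : coeff ν (signedGraphPoly H σ) = 0 := by
  classical
  have : v ∉ (signedGraphPoly H σ).vars := by
    intro h
    unfold signedGraphPoly at h
    have := vars_prod _ h
    simp only [Finset.mem_biUnion, Finset.mem_filter, Finset.mem_univ, true_and] at this
    obtain ⟨p, ⟨hp, hlt⟩, hvp⟩ := this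
    have h3 := vars_sub_subset _ hvp
    rw [Finset.mem_union] at h3
    rcases h3 with h3 | h3
    · simp only [vars_X, Finset.mem_singleton] at h3
      subst h3; exact hv _ hp.symm
    · have := vars_mul _ _ h3
      simp only [vars_C, vars_X, Finset.empty_union, Finset.mem_singleton] at this
      subst this; exact hv _ hp
  by_contra h
  apply this
  rw [mem_vars_iff_mem_support]
  exact ⟨ν, by simpa [mem_support_iff] using h, by simpa using hν⟩

lemma star_one (σ : Sym2 V → ℤ) (hσ : ∀ e, σ e = 1 ∨ σ e = -1) (H : SimpleGraph V)
    (v : V) (hH : ∀ u, ¬ H.Adj v u) (Z : Finset V) (hvZ : v ∉ Z) (μ : V →₀ ℕ) (hv : μ v = 0)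
    (hc : coeff (μ + Finsupp.single v 1 + ind Z) (signedGraphPoly (star H v Z) σ) ≠ 0) :
    ∃ z ∈ Z, coeff (μ + Finsupp.single z 1) (signedGraphPoly H σ) ≠ 0 := by
  induction Z using Finset.induction_on with
  | empty =>
    exfalso
    apply hc
    rw [star_empty]
    exact poly_no_var σ H v hH _ (by simp [ind])
  | insert z Z hz ih =>
    have h1 : z ≠ v := fun h => hvZ (by simp [h])
    have h2 : v ∉ Z := fun h => hvZ (Finset.mem_insert_of_mem h)
    obtain ⟨α, β, hα, hβ, h⟩ := poly_star_insert σ hσ H v z Z hz h1 (hH z)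
    have e1 : μ + Finsupp.single v 1 + ind (insert z Z) - Finsupp.single z 1 =
        μ + Finsupp.single v 1 + ind Z := by
      rw [ind_insert _ _ hz, ← add_assoc]; simp
    have e2 : μ + Finsupp.single v 1 + ind (insert z Z) - Finsupp.single v 1 =
        (μ + Finsupp.single z 1) + ind Z := by
      rw [ind_insert _ _ hz]
      have : μ + Finsupp.single v 1 + (ind Z + Finsupp.single z 1) =
        (μ + Finsupp.single z 1) + ind Z + Finsupp.single v 1 := by abel
      rw [this]; simp
    rw [h, coeff_lin, if_pos (by simp), if_pos (by simp [ind_apply]), e1, e2] at hc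
    by_cases h3 : coeff (μ + Finsupp.single v 1 + ind Z) (signedGraphPoly (star H v Z) σ) = 0
    · rw [h3] at hc
      have h4 : coeff (μ + Finsupp.single z 1 + ind Z) (signedGraphPoly (star H v Z) σ) ≠ 0 := by
        intro h; apply hc; rw [h]; simp
      rw [star_out σ hσ H v Z (fun x hx => ⟨fun h => h2 (h ▸ hx), hH x⟩) _ (by simp [hv, h1])] at h4
      exact ⟨z, Finset.mem_insert_self _ _, h4⟩
    · obtain ⟨x, hx, hx'⟩ := ih h2 h3
      exact ⟨x, Finset.mem_insert_of_mem hx, hx'⟩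

/-- vertex step without a boundary neighbour -/
lemma vstep_a (σ : Sym2 V → ℤ) (hσ : ∀ e, σ e = 1 ∨ σ e = -1) (H : SimpleGraph V)
    (v : V) (hH : ∀ u, ¬ H.Adj v u) (Z Q : Finset V) (hvZ : v ∉ Z) (hvQ : v ∉ Q)
    (hZQ : Disjoint Z Q) (μ : V →₀ ℕ) (hv : μ v = 0) (hQ : ∀ r ∈ Q, μ r = 0)
    (hc : coeff μ (signedGraphPoly H σ) ≠ 0) :
    coeff (μ + ind Z + Finsupp.single v Q.card) (signedGraphPoly (star (star H v Z) v Q) σ) ≠ 0 := by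
  have hvne : ∀ {S : Finset V}, v ∉ S → ∀ x ∈ S, x ≠ v := fun h x hx e => h (e ▸ hx)
  rw [star_in σ hσ, star_out σ hσ]
  · exact hc
  · exact fun z hz => ⟨hvne hvZ z hz, hH z⟩
  · exact hv
  · intro z hz
    refine ⟨hvne hvQ z hz, ?_⟩
    rw [star_adj]
    rintro (h | h | h)
    · exact hH _ h
    · exact Finset.disjoint_left.1 hZQ h.2.1 hz
    · exact h.2.2 rfl
  · intro z hz
    rw [Finsupp.add_apply, hQ z hz, ind_apply, if_neg (fun h => Finset.disjoint_left.1 hZQ h hz)]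

/-- vertex step with one boundary neighbour `w` -/
lemma vstep_b (σ : Sym2 V → ℤ) (hσ : ∀ e, σ e = 1 ∨ σ e = -1) (H : SimpleGraph V)
    (v w : V) (hH : ∀ u, ¬ H.Adj v u) (Z Q : Finset V) (hvZ : v ∉ Z) (hvQ : v ∉ Q)
    (hZQ : Disjoint Z Q) (hwv : w ≠ v) (hwZ : w ∉ Z) (hwQ : w ∉ Q)
    (μ : V →₀ ℕ) (hv : μ v = 0) (hQ : ∀ r ∈ Q, μ r = 0)
    (hc : coeff μ (signedGraphPoly H σ) ≠ 0) :
    coeff (μ + ind Z + Finsupp.single v (1 + Q.card))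
      (signedGraphPoly (star (star H v (insert w Z)) v Q) σ) ≠ 0 ∨
    (μ w ≠ 0 ∧ ∃ z ∈ Z, coeff (μ - Finsupp.single w 1 + Finsupp.single z 1)
      (signedGraphPoly H σ) ≠ 0) := by
  have hvne : ∀ {S : Finset V}, v ∉ S → ∀ x ∈ S, x ≠ v := fun h x hx e => h (e ▸ hx)
  rw [Finsupp.single_add, ← add_assoc, star_in σ hσ]
  · obtain ⟨α, β, hα, hβ, h⟩ := poly_star_insert σ hσ H v w Z hwZ hwv (hH w)
    have e1 : μ + ind Z + Finsupp.single v 1 - Finsupp.single v 1 = μ + ind Z := by simp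
    rw [h, coeff_lin, if_pos (by simp), e1]
    have h1 := (star_out σ hσ H v Z (fun z hz => ⟨hvne hvZ z hz, hH z⟩) μ hv).2 hc
    by_cases hw : μ w = 0
    · left
      rw [if_neg (by simp [hw, ind_apply, hwZ, hwv.symm])]
      simp [hα, h1]
    · rw [if_pos (by simp [hw])]
      by_cases h2 : coeff (μ + ind Z + Finsupp.single v 1 - Finsupp.single w 1)
        (signedGraphPoly (star H v Z) σ) = 0
      · left
        rw [h2]; simp [hα, h1]
      · right
        refine ⟨hw, star_one σ hσ H v hH Z hvZ (μ - Finsupp.single w 1) (by simp [hv]) ?_⟩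
        convert h2 using 2
        ext x
        simp only [Finsupp.add_apply, Finsupp.tsub_apply, Finsupp.single_apply]
        by_cases hx : w = x
        · subst hx; simp only [if_true]; omega
        · simp only [hx, if_false]; omega
  · intro z hz
    refine ⟨hvne hvQ z hz, ?_⟩
    rw [star_adj]
    rintro (h | h | h)
    · exact hH _ h
    · rcases Finset.mem_insert.1 h.2.1 with h' | h'
      · exact hwQ (h' ▸ hz)
      · exact Finset.disjoint_left.1 hZQ h' hz
    · exact h.2.2 rfl
  · intro z hz
    rw [Finsupp.add_apply, Finsupp.add_apply, hQ z hz, ind_apply,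
      if_neg (fun h => Finset.disjoint_left.1 hZQ h hz), Finsupp.single_apply,
      if_neg (fun h : v = z => hvQ (h ▸ hz))]
    rfl

lemma poly_sup (σ : Sym2 V → ℤ) (H H1 H2 : SimpleGraph V)
    (h : ∀ x y, H.Adj x y ↔ H1.Adj x y ∨ H2.Adj x y) (hd : ∀ x y, H1.Adj x y → ¬ H2.Adj x y) :
    signedGraphPoly H σ = signedGraphPoly H1 σ * signedGraphPoly H2 σ := by
  classical
  unfold signedGraphPoly
  rw [← Finset.prod_union]
  · apply Finset.prod_congr _ (fun _ _ => rfl)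
    ext p
    simp only [Finset.mem_filter, Finset.mem_univ, true_and, Finset.mem_union, h]
    tauto
  · rw [Finset.disjoint_left]
    intro p hp hq
    simp only [Finset.mem_filter, Finset.mem_univ, true_and] at hp hq
    exact hd _ _ hp.1 hq.1

lemma poly_deg (σ : Sym2 V → ℤ) (H : SimpleGraph V) (μ ν : V →₀ ℕ)
    (h1 : coeff μ (signedGraphPoly H σ) ≠ 0) (h2 : coeff ν (signedGraphPoly H σ) ≠ 0) :
    ∑ v, μ v = ∑ v, ν v := by
  classical
  have hom : ∃ n, (signedGraphPoly H σ).IsHomogeneous n := by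
    refine ⟨_, IsHomogeneous.prod _ _ (fun _ => 1) ?_⟩
    intro p _
    refine (isHomogeneous_X _ _).sub ?_
    simpa using (isHomogeneous_C V (σ s(p.1, p.2))).mul (isHomogeneous_X ℤ p.1)
  obtain ⟨n, hn⟩ := hom
  have a := hn h1
  have b := hn h2
  rw [← a] at b
  simp only [Finsupp.weight_apply, Finsupp.sum_fintype, Pi.one_apply, smul_eq_mul, mul_one,
    implies_true] at b
  exact b.symm

lemma glue (σ : Sym2 V → ℤ) (H1 H2 : SimpleGraph V) (A : Set V) (η1 η2 : V →₀ ℕ)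
    (hA : ∀ v ∉ A, ∀ u, ¬ H1.Adj v u) (h2 : ∀ v ∈ A, η2 v = 0)
    (hc1 : coeff η1 (signedGraphPoly H1 σ) ≠ 0) (hc2 : coeff η2 (signedGraphPoly H2 σ) ≠ 0) :
    coeff (η1 + η2) (signedGraphPoly H1 σ * signedGraphPoly H2 σ) ≠ 0 := by
  classical
  rw [coeff_mul, Finset.sum_eq_single (η1, η2)]
  · exact mul_ne_zero hc1 hc2
  · rintro ⟨a, b⟩ hab hne
    rw [HasAntidiagonal.mem_antidiagonal] at hab
    simp only at hab
    by_contra hcon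
    have ha := left_ne_zero_of_mul hcon
    have hb := right_ne_zero_of_mul hcon
    simp only at ha hb
    have hab' : ∀ v, a v + b v = η1 v + η2 v := fun v => by
      rw [← Finsupp.add_apply, hab, Finsupp.add_apply]
    have hle : ∀ v ∈ Finset.univ, η2 v ≤ b v := by
      intro v _
      by_cases hv : v ∈ A
      · rw [h2 v hv]; exact Nat.zero_le _
      · have h3 : a v = 0 := by
          by_contra h; exact ha (poly_no_var σ H1 v (hA v hv) a h)
        have := hab' v
        omega
    have hsum := poly_deg σ H2 _ _ hc2 hb
    have heq := (Finset.sum_eq_sum_iff_of_le hle).1 hsum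
    have e2 : η2 = b := by ext v; exact heq v (Finset.mem_univ v)
    apply hne
    subst e2
    have : a = η1 := add_right_cancel hab
    rw [this]
  · intro h
    exfalso
    apply h
    rw [HasAntidiagonal.mem_antidiagonal]

end poly

section main
set_option linter.unusedSectionVars false
variable {V : Type*} [Fintype V] [LinearOrder V]

/-- `G[W]` together with a clique on `R`. -/
def base (G : SimpleGraph V) (W R : Set V) : SimpleGraph V where
  Adj x y := (x ∈ W ∧ y ∈ W ∧ G.Adj x y) ∨ (x ∈ R ∧ y ∈ R ∧ x ≠ y)
  symm := ⟨by
    rintro x y (h | h)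
    · exact Or.inl ⟨h.2.1, h.1, h.2.2.symm⟩
    · exact Or.inr ⟨h.2.1, h.1, h.2.2.symm⟩⟩
  loopless := ⟨by
    rintro x (h | h)
    · exact SimpleGraph.irrefl _ h.2.2
    · exact h.2.2 rfl⟩

lemma base_adj (G : SimpleGraph V) (W R : Set V) (x y : V) : (base G W R).Adj x y ↔
    (x ∈ W ∧ y ∈ W ∧ G.Adj x y) ∨ (x ∈ R ∧ y ∈ R ∧ x ≠ y) := Iff.rfl

/-- edges of `G[W]` outside `R`, with the edges of `M` removed. -/
def eg (G : SimpleGraph V) (W R : Set V) (M : SimpleGraph V) : SimpleGraph V where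
  Adj x y := (G.Adj x y ∧ x ∈ W ∧ y ∈ W ∧ ¬ (x ∈ R ∧ y ∈ R)) ∧ ¬ M.Adj x y
  symm := ⟨fun x y h => ⟨⟨h.1.1.symm, h.1.2.2.1, h.1.2.1, fun h' => h.1.2.2.2 ⟨h'.2, h'.1⟩⟩,
    fun h' => h.2 h'.symm⟩⟩
  loopless := ⟨fun x h => SimpleGraph.irrefl _ h.1.1⟩

lemma eg_adj (G : SimpleGraph V) (W R : Set V) (M : SimpleGraph V) (x y : V) :
    (eg G W R M).Adj x y ↔ (G.Adj x y ∧ x ∈ W ∧ y ∈ W ∧ ¬ (x ∈ R ∧ y ∈ R)) ∧ ¬ M.Adj x y := Iff.rfl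

/-- a valid pair of a matching and an exponent vector. -/
structure Valid (G : SimpleGraph V) (σ : Sym2 V → ℤ) (W B R : Set V) (M : SimpleGraph V)
    (η : V →₀ ℕ) : Prop where
  sub : ∀ x y, M.Adj x y → G.Adj x y ∧ x ∈ W ∧ y ∈ W
  mat : ∀ x y z, M.Adj x y → M.Adj x z → y = z
  avoid : ∀ x ∈ R, ∀ y, ¬ M.Adj x y
  outside : ∀ x, x ∉ W → η x = 0
  root : ∀ x ∈ R, η x = 0
  two : ∀ x ∈ B, η x ≤ 2
  one : ∀ x ∈ B, ∀ y, M.Adj x y → η x ≤ 1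
  three : ∀ x, η x ≤ 3
  ne : coeff η (signedGraphPoly (eg G W R M) σ) ≠ 0

def Good (G : SimpleGraph V) (σ : Sym2 V → ℤ) (W B R : Set V) : Prop :=
  ∃ M η, Valid G σ W B R M η

variable (G : SimpleGraph V) (σ : Sym2 V → ℤ)

lemma graph_ext_at (A H : SimpleGraph V) (v : V) (h1 : ∀ y, y ≠ v → (A.Adj v y ↔ H.Adj v y))
    (h2 : ∀ x y, x ≠ v → y ≠ v → (A.Adj x y ↔ H.Adj x y)) : A = H := by
  ext x y
  by_cases hx : x = v
  · subst hx
    by_cases hy : y = x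
    · subst hy; simp
    · exact h1 y hy
  · by_cases hy : y = v
    · subst hy; rw [A.adj_comm, H.adj_comm]; exact h1 x hx
    · exact h2 x y hx hy

lemma eq_root (W B : Set V) (hBW : B ⊆ W) (M : SimpleGraph V) (r : V) (Z : Finset V) (hr : r ∈ W)
    (hrR : r ∈ B ∨ B = ∅) (mZ : ∀ z, z ∈ Z ↔ z ∈ W ∧ z ≠ r ∧ G.Adj r z ∧ z ∉ B)
    (hMr : ∀ y, ¬ M.Adj r y) :
    eg G W B M = star (eg G (W \ {r}) (B \ {r}) M) r Z := by
  apply graph_ext_at _ _ r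
  · intro y hy
    rw [star_adj, eg_adj, eg_adj, mZ, mZ]
    have := hMr y
    rcases hrR with h1 | h1
    · simp [hy, h1, hr, this]; tauto
    · simp [hy, h1, hr, this]; tauto
  · intro x y hx hy
    rw [star_adj, eg_adj, eg_adj]
    simp [hx, hy]

lemma eq_vert (W R : Set V) (hRW : R ⊆ W) (M : SimpleGraph V) (v : V) (Y Q : Finset V) (hv : v ∈ W)
    (hvR : v ∉ R) (hY : ∀ y, y ∈ Y ↔ y ∈ W ∧ G.Adj v y ∧ y ∉ R)
    (mQ : ∀ z, z ∈ Q ↔ z ∈ R ∧ G.Adj v z) (hMr : ∀ y, ¬ M.Adj v y) :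
    eg G W R M = star (star (eg G (W \ {v}) R M) v Y) v Q := by
  apply graph_ext_at _ _ v
  · intro y hy
    rw [star_adj, star_adj, eg_adj, eg_adj, mQ, mQ, hY, hY]
    have h1 := hMr y
    have h2 := @hRW y
    clear hY mQ hMr hRW
    simp only [Set.mem_sdiff, Set.mem_singleton_iff]
    grind
  · intro x y hx hy
    rw [star_adj, star_adj, eg_adj, eg_adj]
    simp [hx, hy]

lemma eq_vert2 (W R : Set V) (hRW : R ⊆ W) (M M' : SimpleGraph V) (v z : V) (Y Q : Finset V)
    (hv : v ∈ W) (hvR : v ∉ R) (hzR : z ∉ R) (hzv : z ≠ v)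
    (hM' : ∀ x y, M'.Adj x y ↔ M.Adj x y ∨ (x = v ∧ y = z) ∨ (x = z ∧ y = v))
    (hY : ∀ y, y ∈ Y ↔ y ≠ z ∧ (y ∈ W ∧ G.Adj v y ∧ y ∉ R))
    (mQ : ∀ z, z ∈ Q ↔ z ∈ R ∧ G.Adj v z) (hMr : ∀ y, ¬ M.Adj v y) :
    eg G W R M' = star (star (eg G (W \ {v}) R M) v Y) v Q := by
  apply graph_ext_at _ _ v
  · intro y hy
    rw [star_adj, star_adj, eg_adj, eg_adj, mQ, mQ, hY, hY, hM']
    have h1 := hMr y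
    have h2 := @hRW y
    by_cases hyz : y = z
    · subst hyz; simp [hvR, hzR, hy]
    · clear hY mQ hMr hRW hM'
      simp only [Set.mem_sdiff, Set.mem_singleton_iff]
      grind
  · intro x y hx hy
    rw [star_adj, star_adj, eg_adj, eg_adj, hM']
    simp [hx, hy]

lemma eq_glue (W R K S : Set V) (M1 M2 : SimpleGraph V) (hKW : K ⊆ W) (hSW : S ⊆ W)
    (hKS : ∀ x ∈ K, x ∉ S) (hRK : ∀ x ∈ R, x ∉ K) (hRW : R ⊆ W)
    (hK : ∀ x ∈ K, ∀ y ∈ W, G.Adj x y → y ∈ K ∪ S)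
    (m1 : ∀ x y, M1.Adj x y → x ∉ K) (m2 : ∀ x y, M2.Adj x y → x ∈ K) (x y : V) :
    (eg G W R (M1 ⊔ M2)).Adj x y ↔ (eg G (W \ K) R M1).Adj x y ∨ (eg G (K ∪ S) S M2).Adj x y := by
  rw [eg_adj, eg_adj, eg_adj, SimpleGraph.sup_adj]
  have a1 := m1 x y
  have a2 := m2 x y
  have b1 : M1.Adj x y → y ∉ K := fun h => m1 y x h.symm
  have b2 : M2.Adj x y → y ∈ K := fun h => m2 y x h.symm
  have c1 := hKS x
  have c2 := hKS y
  have d1 := hRK x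
  have d2 := hRK y
  have e1 : x ∈ K → y ∈ W → G.Adj x y → y ∈ K ∨ y ∈ S := fun a b c => hK x a y b c
  have e2 : y ∈ K → x ∈ W → G.Adj x y → x ∈ K ∨ x ∈ S := fun a b c => hK y a x b c.symm
  have f1 := @hKW x
  have f2 := @hKW y
  have g1 := @hSW x
  have g2 := @hSW y
  clear m1 m2 hKS hRK hK hKW hSW hRW
  simp only [Set.mem_sdiff, Set.mem_union]
  by_cases hg : G.Adj x y
  · by_cases hx : x ∈ K <;> by_cases hy : y ∈ K <;>
      simp only [hx, hy, hg, not_true, not_false_iff, true_and, and_true, false_and, and_false,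
        true_or, or_true, false_or, or_false, forall_true_left, true_implies, false_implies,
        imp_false] at * <;> grind
  · simp [hg]

lemma removeRoot (hσ : ∀ e, σ e = 1 ∨ σ e = -1) (W B R : Set V) (hRW : R ⊆ W) (hBR : B = R) (r : V) (hr : r ∈ W)
    (hrR : r ∈ R ∨ R = ∅)
    (h : Good G σ (W \ {r}) ({x | x ∈ W \ {r} ∧ G.Adj r x} ∪ R \ {r}) (R \ {r})) :
    Good G σ W B R := by
  classical
  subst hBR
  obtain ⟨M, η, h⟩ := h
  set Z : Finset V := Finset.univ.filter (fun z => z ∈ W ∧ z ≠ r ∧ G.Adj r z ∧ z ∉ B) with hZ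
  have mZ : ∀ z, z ∈ Z ↔ z ∈ W ∧ z ≠ r ∧ G.Adj r z ∧ z ∉ B := by simp [hZ]
  have hMr : ∀ y, ¬ M.Adj r y := fun y hy => (h.sub _ _ hy).2.1.2 rfl
  have hMr' : ∀ y, ¬ M.Adj y r := fun y hy => (h.sub _ _ hy).2.2.2 rfl
  have hηr : η r = 0 := h.outside r (fun h => h.2 rfl)
  have hrZ : r ∉ Z := by simp [mZ]
  have hBz : ∀ x ∈ B, (η + ind Z) x = 0 := by
    intro x hx
    rw [Finsupp.add_apply, ind_apply, if_neg (by simp [mZ, hx])]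
    by_cases hxr : x = r
    · rw [hxr, hηr]
    · rw [h.root x ⟨hx, hxr⟩]
  refine ⟨M, η + ind Z, ⟨fun x y hxy => ?_, h.mat, ?_, ?_, hBz, ?_, ?_, ?_, ?_⟩⟩
  · have := h.sub x y hxy
    exact ⟨this.1, this.2.1.1, this.2.2.1⟩
  · intro x hx y hxy
    by_cases hxr : x = r
    · exact hMr y (hxr ▸ hxy)
    · exact h.avoid x ⟨hx, hxr⟩ y hxy
  · intro x hx
    rw [Finsupp.add_apply, h.outside x (fun h => hx h.1), ind_apply, if_neg (by simp [mZ, hx])]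
  · intro x hx; rw [hBz x hx]; omega
  · intro x hx y _; rw [hBz x hx]; omega
  · intro x
    rw [Finsupp.add_apply, ind_apply]
    split_ifs with hx
    · rw [mZ] at hx
      have := h.two x (Or.inl ⟨⟨hx.1, hx.2.1⟩, hx.2.2.1⟩)
      omega
    · simpa using h.three x
  · have e := eq_root G W B hRW M r Z hr hrR mZ hMr
    rw [e, star_out σ hσ]
    · exact h.ne
    · intro z hz
      exact ⟨fun e => hrZ (e ▸ hz), fun h => h.1.2.1.2 rfl⟩
    · exact hηr

set_option maxHeartbeats 1000000 in
lemma removeVertex (hσ : ∀ e, σ e = 1 ∨ σ e = -1) (W B R : Set V) (hBW : B ⊆ W) (hRB : R ⊆ B) (v : V) (hvB : v ∈ B) (hvR : v ∉ R)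
    (h1 : {y | y ∈ B \ R ∧ G.Adj v y}.ncard ≤ 1) (h2 : {y | y ∈ B ∧ G.Adj v y}.ncard ≤ 2)
    (h : Good G σ (W \ {v}) ({x | x ∈ W ∧ G.Adj v x} ∪ B \ {v}) R) :
    Good G σ W B R := by
  classical
  obtain ⟨M, η, h⟩ := h
  have hMv : ∀ y, ¬ M.Adj v y := fun y hy => (h.sub _ _ hy).2.1.2 rfl
  have hMv' : ∀ y, ¬ M.Adj y v := fun y hy => (h.sub _ _ hy).2.2.2 rfl
  have hηv : η v = 0 := h.outside v (fun h => h.2 rfl)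
  set Z : Finset V := Finset.univ.filter (fun z => z ∈ W ∧ G.Adj v z ∧ z ∉ B) with hZ
  have mZ : ∀ z, z ∈ Z ↔ z ∈ W ∧ G.Adj v z ∧ z ∉ B := by simp [hZ]
  set Q : Finset V := Finset.univ.filter (fun z => z ∈ R ∧ G.Adj v z) with hQ
  have mQ : ∀ z, z ∈ Q ↔ z ∈ R ∧ G.Adj v z := by simp [hQ]
  have hvZ : v ∉ Z := by simp [mZ]
  have hvQ : v ∉ Q := by simp [mQ]
  have hZQ : Disjoint Z Q := by
    rw [Finset.disjoint_left]
    intro z hz hz'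
    rw [mZ] at hz; rw [mQ] at hz'
    exact hz.2.2 (hRB hz'.1)
  have hHv : ∀ u, ¬ (eg G (W \ {v}) R M).Adj v u := fun u h => h.1.2.1.2 rfl
  have hQη : ∀ r ∈ Q, η r = 0 := fun r hr => h.root r ((mQ r).1 hr).1
  have twoZ : ∀ z ∈ Z, η z ≤ 2 := fun z hz =>
    h.two z (Or.inl ⟨((mZ z).1 hz).1, ((mZ z).1 hz).2.1⟩)
  have hne : ∀ {x y}, G.Adj x y → x ≠ y := fun h => h.ne
  have hsym : ∀ x y, G.Adj x y ↔ G.Adj y x := fun x y => SimpleGraph.adj_comm _ _ _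
  have hRv : ∀ x ∈ R, x ≠ v := fun x hx e => hvR (e ▸ hx)
  -- old bounds on `B`
  have hBold : ∀ x ∈ B, η x ≤ 2 := by
    intro x hx
    by_cases hxv : x = v
    · rw [hxv, hηv]; omega
    · exact h.two x (Or.inr ⟨hx, hxv⟩)
  have hBold1 : ∀ x ∈ B, ∀ y, M.Adj x y → η x ≤ 1 := by
    intro x hx y hxy
    by_cases hxv : x = v
    · rw [hxv, hηv]; omega
    · exact h.one x (Or.inr ⟨hx, hxv⟩) y hxy
  have hQle : Q.card ≤ 2 := by
    refine le_trans ?_ h2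
    rw [← Set.ncard_coe_finset]
    refine Set.ncard_le_ncard ?_ (Set.toFinite _)
    intro z hz
    have := (mQ z).1 (by simpa using hz)
    exact ⟨hRB this.1, this.2⟩
  have hMsub : ∀ x y, M.Adj x y → G.Adj x y ∧ x ∈ W ∧ y ∈ W := fun x y hxy => by
    have := h.sub x y hxy
    exact ⟨this.1, this.2.1.1, this.2.2.1⟩
  -- a generic certificate with the same matching
  have fin : ∀ (η' : V →₀ ℕ) (Y : Finset V) (k : ℕ), k ≤ 2 →
      (∀ x ∉ Z, η' x = η x + if x = v then k else 0) → (∀ x ∈ Z, η' x ≤ 3) →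
      coeff η' (signedGraphPoly (star (star (eg G (W \ {v}) R M) v Y) v Q) σ) ≠ 0 →
      (∀ y, y ∈ Y ↔ y ∈ W ∧ G.Adj v y ∧ y ∉ R) → Good G σ W B R := by
    intro η' Y k hk hη' hη'Z hc hY
    have hBZ : ∀ x ∈ B, x ∉ Z := fun x hx hz => ((mZ x).1 hz).2.2 hx
    refine ⟨M, η', ⟨hMsub, h.mat, h.avoid, ?_, ?_, ?_, ?_, ?_, ?_⟩⟩
    · intro x hx
      have hxv : x ≠ v := fun e => hx (e ▸ hBW hvB)
      rw [hη' x (by simp [mZ, hx]), if_neg hxv, h.outside x (fun h => hx h.1)]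
    · intro x hx
      rw [hη' x (hBZ x (hRB hx)), if_neg (hRv x hx), h.root x hx]
    · intro x hx
      rw [hη' x (hBZ x hx)]
      split_ifs with hxv
      · rw [hxv, hηv]; omega
      · exact hBold x hx
    · intro x hx y hxy
      have hxv : x ≠ v := fun e => hMv y (e ▸ hxy)
      rw [hη' x (hBZ x hx), if_neg hxv]
      exact hBold1 x hx y hxy
    · intro x
      by_cases hx : x ∈ Z
      · exact hη'Z x hx
      · rw [hη' x hx]
        split_ifs with hxv
        · rw [hxv, hηv]; omega
        · exact h.three x
    · have e := eq_vert G W R (hRB.trans hBW) M v Y Q (hBW hvB) hvR hY mQ hMv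
      rw [e]; exact hc
  rcases Set.eq_empty_or_nonempty {y | y ∈ B \ R ∧ G.Adj v y} with hemp | ⟨w, hw⟩
  · -- no boundary neighbour
    refine fin (η + ind Z + Finsupp.single v Q.card) Z Q.card hQle ?_ ?_
      (vstep_a σ hσ _ v hHv Z Q hvZ hvQ hZQ η hηv hQη h.ne) ?_
    · intro x hx
      simp only [Finsupp.add_apply, ind_apply, if_neg hx, Finsupp.single_apply, eq_comm (a := v)]
      omega
    · intro x hx
      have hxv : v ≠ x := fun e => hvZ (e ▸ hx)
      simp only [Finsupp.add_apply, ind_apply, if_pos hx, Finsupp.single_apply, if_neg hxv]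
      have := twoZ x hx
      omega
    · intro y
      rw [mZ]
      constructor
      · rintro ⟨a, b, c⟩; exact ⟨a, b, fun h => c (hRB h)⟩
      · rintro ⟨a, b, c⟩
        refine ⟨a, b, fun hB => ?_⟩
        have : y ∈ {y | y ∈ B \ R ∧ G.Adj v y} := ⟨⟨hB, c⟩, b⟩
        rw [hemp] at this; exact this
  · obtain ⟨⟨hwB, hwR⟩, hvw⟩ := hw
    have huniq : ∀ y, y ∈ B → y ∉ R → G.Adj v y → y = w := by
      intro y hyB hyR hvy
      exact (Set.ncard_le_one (Set.toFinite _)).1 h1 y ⟨⟨hyB, hyR⟩, hvy⟩ w ⟨⟨hwB, hwR⟩, hvw⟩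
    have hwv : w ≠ v := hvw.ne'
    have hwZ : w ∉ Z := by simp [mZ, hwB]
    have hwQ : w ∉ Q := by simp [mQ, hwR]
    have hQ1 : Q.card ≤ 1 := by
      have : (insert w Q).card ≤ 2 := by
        refine le_trans ?_ h2
        rw [← Set.ncard_coe_finset]
        refine Set.ncard_le_ncard ?_ (Set.toFinite _)
        intro z hz
        have hz' : z = w ∨ z ∈ Q := by simpa using hz
        rcases hz' with rfl | hz'
        · exact ⟨hwB, hvw⟩
        · have := (mQ z).1 hz'
          exact ⟨hRB this.1, this.2⟩
      rw [Finset.card_insert_of_notMem hwQ] at this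
      omega
    have hYw : ∀ y, y ∈ insert w Z ↔ y ∈ W ∧ G.Adj v y ∧ y ∉ R := by
      intro y
      rw [Finset.mem_insert, mZ]
      constructor
      · rintro (rfl | ⟨a, b, c⟩)
        · exact ⟨hBW hwB, hvw, hwR⟩
        · exact ⟨a, b, fun h => c (hRB h)⟩
      · rintro ⟨a, b, c⟩
        by_cases hyB : y ∈ B
        · exact Or.inl (huniq y hyB c b)
        · exact Or.inr ⟨a, b, hyB⟩
    rcases vstep_b σ hσ _ v w hHv Z Q hvZ hvQ hZQ hwv hwZ hwQ η hηv hQη h.ne with hc | ⟨hw0, z, hz, hc⟩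
    · refine fin _ (insert w Z) (1 + Q.card) (by omega) ?_ ?_ hc hYw
      · intro x hx
        simp only [Finsupp.add_apply, ind_apply, if_neg hx, Finsupp.single_apply, eq_comm (a := v)]
        omega
      · intro x hx
        have hxv : v ≠ x := fun e => hvZ (e ▸ hx)
        simp only [Finsupp.add_apply, ind_apply, if_pos hx, Finsupp.single_apply, if_neg hxv]
        have := twoZ x hx
        omega
    · have hzw : z ≠ w := fun e => hwZ (e ▸ hz)
      have hzv : z ≠ v := fun e => hvZ (e ▸ hz)
      have hzQ : z ∉ Q := Finset.disjoint_left.1 hZQ hz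
      obtain ⟨hzW, hvz, hzB⟩ := (mZ z).1 hz
      set μ := η - Finsupp.single w 1 + Finsupp.single z 1 with hμ
      have μv : μ v = 0 := by simp [hμ, hηv, hzv.symm]
      have μQ : ∀ r ∈ Q, μ r = 0 := by
        intro r hr
        have : z ≠ r := fun e => hzQ (e ▸ hr)
        simp [hμ, hQη r hr, this.symm]
      have μw : μ w + 1 = η w := by
        simp [hμ, hzw.symm]; omega
      have μz : μ z = η z + 1 := by
        simp [hμ, hzw]
      have μx : ∀ x, x ≠ w → x ≠ z → μ x = η x := by
        intro x h1 h2
        simp [hμ, h1, h2]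
      by_cases hcov : ∃ y, M.Adj z y
      · obtain ⟨y, hzy⟩ := hcov
        have hz1 : η z ≤ 1 := h.one z (Or.inl ⟨hzW, hvz⟩) y hzy
        refine fin _ (insert w Z) Q.card (by omega) ?_ ?_
          (vstep_a σ hσ _ v hHv (insert w Z) Q (by simp [hwv.symm, hvZ]) hvQ
            (Finset.disjoint_insert_left.2 ⟨hwQ, hZQ⟩) μ μv μQ hc) hYw
        · intro x hx
          simp only [Finsupp.add_apply, ind_apply, Finset.mem_insert, hx, or_false,
            Finsupp.single_apply, eq_comm (a := v)]
          by_cases hxw : x = w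
          · subst hxw; simp only [if_true]; omega
          · rw [μx x hxw (fun e => hx (e ▸ hz))]; simp only [hxw, if_false]; omega
        · intro x hx
          have hxv : v ≠ x := fun e => hvZ (e ▸ hx)
          have hxw : x ≠ w := fun e => hwZ (e ▸ hx)
          simp only [Finsupp.add_apply, ind_apply, Finset.mem_insert, hx, or_true, if_true,
            Finsupp.single_apply, if_neg hxv]
          by_cases hxz : x = z
          · subst hxz; omega
          · rw [μx x hxw hxz]
            have := twoZ x hx
            omega
      · push Not at hcov
        have hcov' : ∀ y, ¬ M.Adj y z := fun y h => hcov y h.symm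
        -- new matching
        let M' : SimpleGraph V := ⟨fun x y => M.Adj x y ∨ (x = v ∧ y = z) ∨ (x = z ∧ y = v),
          ⟨by
            rintro x y (h | h | h)
            · exact Or.inl h.symm
            · exact Or.inr (Or.inr ⟨h.2, h.1⟩)
            · exact Or.inr (Or.inl ⟨h.2, h.1⟩)⟩,
          ⟨by
            rintro x (h | h | h)
            · exact SimpleGraph.irrefl _ h
            · exact hzv (h.2.symm.trans h.1)
            · exact hzv (h.1.symm.trans h.2)⟩⟩
        have hM' : ∀ x y, M'.Adj x y ↔ M.Adj x y ∨ (x = v ∧ y = z) ∨ (x = z ∧ y = v) :=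
          fun _ _ => Iff.rfl
        set Y := insert w (Z.erase z) with hYdef
        have hYw' : ∀ y, y ∈ Y ↔ y ≠ z ∧ (y ∈ W ∧ G.Adj v y ∧ y ∉ R) := by
          intro y
          rw [← hYw, hYdef]
          simp only [Finset.mem_insert, Finset.mem_erase]
          constructor
          · rintro (rfl | h)
            · exact ⟨hzw.symm, Or.inl rfl⟩
            · exact ⟨h.1, Or.inr h.2⟩
          · rintro ⟨h1, h2⟩; tauto
        have hvY : v ∉ Y := by rw [hYw']; simp
        have hYQ : Disjoint Y Q := by
          rw [Finset.disjoint_left]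
          intro y hy hq
          exact ((hYw' y).1 hy).2.2.2 ((mQ y).1 hq).1
        have hc' := vstep_a σ hσ _ v hHv Y Q hvY hvQ hYQ μ μv μQ hc
        set η' := μ + ind Y + Finsupp.single v Q.card with hη'
        have hzY : z ∉ Y := by rw [hYw']; simp
        have ηv : η' v = Q.card := by
          simp [hη', μv, ind_apply, hvY]
        have ηz : η' z = η z + 1 := by
          simp [hη', μz, ind_apply, hzY, hzv]
        have ηZ : ∀ x ∈ Z, x ≠ z → η' x = η x + 1 := by
          intro x hx hxz
          have hxv : x ≠ v := fun e => hvZ (e ▸ hx)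
          have hxw : x ≠ w := fun e => hwZ (e ▸ hx)
          have hxY : x ∈ Y := by simp [hYdef, hx, hxz]
          simp [hη', μx x hxw hxz, ind_apply, hxY, hxv]
        have ηo : ∀ x ∉ Z, x ≠ v → η' x = η x := by
          intro x hx hxv
          by_cases hxw : x = w
          · subst hxw
            have hxY : x ∈ Y := by simp [hYdef]
            simp [hη', ind_apply, hxY, hxv, μw]
          · have hxY : x ∉ Y := by simp [hYdef, hxw, hx]
            simp [hη', ind_apply, hxY, hxv, μx x hxw (fun e => hx (e ▸ hz))]
        have hBZ : ∀ x ∈ B, x ∉ Z := fun x hx hz => ((mZ x).1 hz).2.2 hx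
        refine ⟨M', η', ⟨?_, ?_, ?_, ?_, ?_, ?_, ?_, ?_, ?_⟩⟩
        · rintro x y (hxy | ⟨rfl, rfl⟩ | ⟨rfl, rfl⟩)
          · exact hMsub x y hxy
          · exact ⟨hvz, hBW hvB, hzW⟩
          · exact ⟨hvz.symm, hzW, hBW hvB⟩
        · rintro x y t (hxy | ⟨rfl, rfl⟩ | ⟨rfl, rfl⟩) (hxt | ⟨h1, h2⟩ | ⟨h1, h2⟩)
          · exact h.mat x y t hxy hxt
          · subst h1; exact absurd hxy (hMv y)
          · subst h1; exact absurd hxy (hcov y)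
          · exact absurd hxt (hMv t)
          · exact h2.symm
          · exact absurd h1.symm hzv
          · exact absurd hxt (hcov t)
          · exact absurd h1 hzv
          · exact h2.symm
        · rintro x hx y (hxy | ⟨rfl, rfl⟩ | ⟨rfl, rfl⟩)
          · exact h.avoid x hx y hxy
          · exact hvR hx
          · exact hzB (hRB hx)
        · intro x hx
          rw [ηo x (by simp [mZ, hx]) (fun e => hx (e ▸ hBW hvB)), h.outside x (fun h => hx h.1)]
        · intro x hx
          rw [ηo x (hBZ x (hRB hx)) (hRv x hx), h.root x hx]
        · intro x hx
          by_cases hxv : x = v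
          · rw [hxv, ηv]; omega
          · rw [ηo x (hBZ x hx) hxv]; exact hBold x hx
        · rintro x hx y (hxy | ⟨rfl, rfl⟩ | ⟨rfl, rfl⟩)
          · rw [ηo x (hBZ x hx) (fun e => hMv y (e ▸ hxy))]
            exact hBold1 x hx y hxy
          · rw [ηv]; omega
          · exact absurd hx hzB
        · intro x
          by_cases hxv : x = v
          · rw [hxv, ηv]; omega
          by_cases hxZ : x ∈ Z
          · have := twoZ x hxZ
            by_cases hxz : x = z
            · subst hxz; omega
            · rw [ηZ x hxZ hxz]; omega
          · rw [ηo x hxZ hxv]; exact h.three x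
        · have e := eq_vert2 G W R (hRB.trans hBW) M M' v z Y Q (hBW hvB) hvR
            (fun h => hzB (hRB h)) hzv hM' hYw' mQ hMv
          rw [e]; exact hc'

lemma gluing (W B R K S : Set V) (hBW : B ⊆ W) (hRB : R ⊆ B) (hKW : K ⊆ W) (hKS : Disjoint K S)
    (hSB : S ⊆ B) (hRK : Disjoint R K)
    (hK : ∀ x ∈ K, ∀ y ∈ W, G.Adj x y → y ∈ K ∪ S)
    (h1 : Good G σ (W \ K) (B \ K) R) (h2 : Good G σ (K ∪ S) (B ∩ (K ∪ S)) S) :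
    Good G σ W B R := by
  obtain ⟨M1, η1, h1⟩ := h1
  obtain ⟨M2, η2, h2⟩ := h2
  have hSW : S ⊆ W := hSB.trans hBW
  have hKS' : ∀ x ∈ K, x ∉ S := fun x hx => Set.disjoint_left.1 hKS hx
  have hRK' : ∀ x ∈ R, x ∉ K := fun x hx => Set.disjoint_left.1 hRK hx
  have z2 : ∀ x, x ∉ K → η2 x = 0 := by
    intro x hx
    by_cases hxS : x ∈ S
    · exact h2.root x hxS
    · exact h2.outside x (by rintro (h | h); exacts [hx h, hxS h])
  have z1 : ∀ x ∈ K, η1 x = 0 := fun x hx => h1.outside x (fun h => h.2 hx)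
  have m2 : ∀ x y, M2.Adj x y → x ∈ K := by
    intro x y h
    rcases (h2.sub x y h).2.1 with h' | h'
    · exact h'
    · exact absurd h (h2.avoid x h' y)
  have m1 : ∀ x y, M1.Adj x y → x ∉ K := fun x y h => (h1.sub x y h).2.1.2
  refine ⟨M1 ⊔ M2, η1 + η2, ⟨?_, ?_, ?_, ?_, ?_, ?_, ?_, ?_, ?_⟩⟩
  · rintro x y (h | h)
    · have := h1.sub x y h; exact ⟨this.1, this.2.1.1, this.2.2.1⟩
    · exact ⟨(h2.sub x y h).1, hKW (m2 x y h), hKW (m2 y x h.symm)⟩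
  · rintro x y z (h | h) (h' | h')
    · exact h1.mat x y z h h'
    · exact absurd (m2 _ _ h') (m1 _ _ h)
    · exact absurd (m2 _ _ h) (m1 _ _ h')
    · exact h2.mat x y z h h'
  · rintro x hx y (h | h)
    · exact h1.avoid x hx y h
    · exact hRK' x hx (m2 _ _ h)
  · intro x hx
    rw [Finsupp.add_apply, h1.outside x (fun h => hx h.1), z2 x (fun h => hx (hKW h))]
  · intro x hx
    rw [Finsupp.add_apply, h1.root x hx, z2 x (hRK' x hx)]
  · intro x hx
    rw [Finsupp.add_apply]
    by_cases hxK : x ∈ K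
    · rw [z1 x hxK, zero_add]; exact h2.two x ⟨hx, Or.inl hxK⟩
    · rw [z2 x hxK, add_zero]; exact h1.two x ⟨hx, hxK⟩
  · rintro x hx y (h | h)
    · have hxK := m1 _ _ h
      rw [Finsupp.add_apply, z2 x hxK, add_zero]; exact h1.one x ⟨hx, hxK⟩ y h
    · have hxK := m2 _ _ h
      rw [Finsupp.add_apply, z1 x hxK, zero_add]; exact h2.one x ⟨hx, Or.inl hxK⟩ y h
  · intro x
    rw [Finsupp.add_apply]
    by_cases hxK : x ∈ K
    · rw [z1 x hxK, zero_add]; exact h2.three x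
    · rw [z2 x hxK, add_zero]; exact h1.three x
  · rw [poly_sup σ _ (eg G (W \ K) R M1) (eg G (K ∪ S) S M2)]
    · exact glue σ _ _ (W \ K) η1 η2 (fun v hv u h => hv h.1.2.1) (fun v hv => z2 v hv.2) h1.ne h2.ne
    · exact eq_glue G W R K S M1 M2 hKW hSW hKS' hRK' (hRB.trans hBW) hK m1 m2
    · rintro x y ⟨⟨_, hx, hy, _⟩, _⟩ ⟨⟨_, hx', hy', h⟩, _⟩
      apply h
      exact ⟨hx'.resolve_left hx.2, hy'.resolve_left hy.2⟩

end main

section induction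
set_option linter.unusedSectionVars false
variable {V : Type*} [Fintype V] [LinearOrder V]

lemma planar_sub {Γ Γ' : SimpleGraph V} {B B' : Set V} (hP : (cone Γ B).IsPlanar)
    (h1 : ∀ x y, Γ'.Adj x y → Γ.Adj x y) (h2 : B' ⊆ B) : (cone Γ' B').IsPlanar := by
  refine planar_transfer hP _ (fun x => {x}) (fun x _ => Cn.singleton x) ?_ ?_
  · intro x y hxy _ _
    simpa using hxy
  · intro x y hxy
    refine ⟨x, rfl, y, rfl, ?_⟩
    rcases x with _ | x <;> rcases y with _ | y
    · exact hxy
    · exact h2 hxy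
    · exact h2 hxy
    · exact h1 _ _ hxy

variable (G : SimpleGraph V) (σ : Sym2 V → ℤ)

lemma planar_root (W B R : Set V) (hRW : R ⊆ W) (hP : (cone (base G W R) B).IsPlanar) (r : V)
    (hr : r ∈ W) (hrR : r ∈ R ∨ R = ∅) :
    (cone (base G (W \ {r}) (R \ {r})) ({x | x ∈ W \ {r} ∧ G.Adj r x} ∪ R \ {r})).IsPlanar := by
  have hiso : ∀ y, ¬ (cone (base G (W \ {r}) (R \ {r}))
      ({x | x ∈ W \ {r} ∧ G.Adj r x} ∪ R \ {r})).Adj (some r) y := by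
    rintro (_ | y) h
    · rcases h with h | h
      · exact h.1.2 rfl
      · exact h.2 rfl
    · rcases h with h | h
      · exact h.1.2 rfl
      · exact h.1.2 rfl
  have toB : ∀ y, y ∈ ({x | x ∈ W \ {r} ∧ G.Adj r x} ∪ R \ {r}) → (base G W R).Adj r y := by
    rintro y (h | h)
    · exact Or.inl ⟨hr, h.1.1, h.2⟩
    · rcases hrR with h' | h'
      · exact Or.inr ⟨h', h.1, fun e => h.2 e.symm⟩
      · rw [h'] at h; exact absurd h.1 (Set.notMem_empty _)
  refine planar_transfer hP _ (fun x => match x with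
    | none => {some r}
    | some x => {some x}) ?_ ?_ ?_
  · rintro (_ | x) _ <;> exact Cn.singleton _
  · rintro (_ | x) (_ | y) hxy ⟨z, hz⟩ ⟨t, ht⟩
    · exact absurd rfl hxy
    · simp only [Set.disjoint_singleton, ne_eq]
      intro e
      rw [← e] at ht
      exact hiso _ ht
    · simp only [Set.disjoint_singleton, ne_eq]
      intro e
      rw [e] at hz
      exact hiso _ hz
    · simpa using hxy
  · rintro (_ | x) (_ | y) hxy
    · exact absurd hxy id
    · exact ⟨_, rfl, _, rfl, toB y hxy⟩
    · exact ⟨_, rfl, _, rfl, (toB x hxy).symm⟩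
    · refine ⟨_, rfl, _, rfl, ?_⟩
      rcases hxy with h | h
      · exact Or.inl ⟨h.1.1, h.2.1.1, h.2.2⟩
      · exact Or.inr ⟨h.1.1, h.2.1.1, h.2.2⟩

lemma planar_vertex (W B R : Set V) (hBW : B ⊆ W) (hP : (cone (base G W R) B).IsPlanar)
    (v : V) (hvB : v ∈ B) (hvR : v ∉ R) :
    (cone (base G (W \ {v}) R) ({x | x ∈ W ∧ G.Adj v x} ∪ B \ {v})).IsPlanar := by
  have hiso : ∀ y, ¬ (cone (base G (W \ {v}) R)
      ({x | x ∈ W ∧ G.Adj v x} ∪ B \ {v})).Adj (some v) y := by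
    rintro (_ | y) h
    · rcases h with h | h
      · exact SimpleGraph.irrefl _ h.2
      · exact h.2 rfl
    · rcases h with h | h
      · exact h.1.2 rfl
      · exact hvR h.1
  have toB : ∀ y, y ∈ ({x | x ∈ W ∧ G.Adj v x} ∪ B \ {v}) →
      ∃ p ∈ ({none, some v} : Set (Option V)), (cone (base G W R) B).Adj p (some y) := by
    rintro y (h | h)
    · exact ⟨some v, by simp, Or.inl ⟨hBW hvB, h.1, h.2⟩⟩
    · exact ⟨none, by simp, h.1⟩
  refine planar_transfer hP _ (fun x => match x with
    | none => {none, some v}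
    | some x => {some x}) ?_ ?_ ?_
  · rintro (_ | x) _
    · exact (Cn.singleton (some v)).insert rfl hvB
    · exact Cn.singleton _
  · rintro (_ | x) (_ | y) hxy ⟨z, hz⟩ ⟨t, ht⟩
    · exact absurd rfl hxy
    · rw [Set.disjoint_singleton_right]
      rintro (e | e)
      · exact absurd e (by simp)
      · rw [Set.mem_singleton_iff] at e
        rw [e] at ht
        exact hiso _ ht
    · rw [Set.disjoint_singleton_left]
      rintro (e | e)
      · exact absurd e (by simp)
      · rw [Set.mem_singleton_iff] at e
        rw [e] at hz
        exact hiso _ hz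
    · simpa using hxy
  · rintro (_ | x) (_ | y) hxy
    · exact absurd hxy id
    · obtain ⟨p, hp, h⟩ := toB y hxy
      exact ⟨p, hp, _, rfl, h⟩
    · obtain ⟨p, hp, h⟩ := toB x hxy
      exact ⟨_, rfl, p, hp, h.symm⟩
    · refine ⟨_, rfl, _, rfl, ?_⟩
      rcases hxy with h | h
      · exact Or.inl ⟨h.1.1, h.2.1.1, h.2.2⟩
      · exact Or.inr h

open scoped Classical in
lemma planar_glue (W B R K S K' : Set V) (u w : V) (huw : u ≠ w) (hS : S = {u, w})
    (hKS : K ∪ S ⊆ W) (hd : Disjoint K' (K ∪ S)) (hP : (cone (base G W R) B).IsPlanar)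
    (hK' : Cn (base G W R) K') (hu : ∃ y ∈ K', (base G W R).Adj y u)
    (hw : ∃ y ∈ K', (base G W R).Adj y w) :
    (cone (base G (K ∪ S) S) (B ∩ (K ∪ S))).IsPlanar := by
  have hin : ∀ x, (∃ y, (cone (base G (K ∪ S) S) (B ∩ (K ∪ S))).Adj (some x) y) → x ∈ K ∪ S := by
    rintro x ⟨_ | y, h⟩
    · exact h.2
    · rcases h with h | h
      · exact h.1
      · exact Or.inr h.1
  let ψ : V → Set V := fun x => if x = u then insert u K' else {x}
  have ψu : ψ u = insert u K' := if_pos rfl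
  have ψx : ∀ x, x ≠ u → ψ x = {x} := fun x hx => if_neg hx
  have hself : ∀ x, x ∈ ψ x := by
    intro x
    by_cases hx : x = u
    · rw [hx, ψu]; exact Set.mem_insert _ _
    · rw [ψx x hx]; rfl
  have hψc : ∀ x, Cn (base G W R) (ψ x) := by
    intro x
    by_cases hx : x = u
    · rw [hx, ψu]
      obtain ⟨y, hy, h⟩ := hu
      exact hK'.insert hy h.symm
    · rw [ψx x hx]; exact Cn.singleton x
  have hψd : ∀ x y, x ≠ y → x ∈ K ∪ S → y ∈ K ∪ S → Disjoint (ψ x) (ψ y) := by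
    have hK'n : ∀ x ∈ K ∪ S, x ∉ K' := fun x hx h => Set.disjoint_left.1 hd h hx
    intro x y hxy hx hy
    by_cases hxu : x = u
    · have hyu : y ≠ u := fun e => hxy (hxu.trans e.symm)
      rw [hxu, ψu, ψx y hyu, Set.disjoint_singleton_right]
      rintro (e | e)
      · exact hyu e
      · exact hK'n y hy e
    · rw [ψx x hxu, Set.disjoint_singleton_left]
      by_cases hyu : y = u
      · rw [hyu, ψu]
        rintro (e | e)
        · exact hxu e
        · exact hK'n x hx e
      · rw [ψx y hyu]
        exact hxy
  have huw' : ∃ y ∈ ψ u, (base G W R).Adj y w := by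
    obtain ⟨y, hy, h⟩ := hw
    exact ⟨y, by rw [ψu]; exact Set.mem_insert_of_mem _ hy, h⟩
  refine planar_transfer hP _ (fun x => match x with
    | none => {none}
    | some x => some '' ψ x) ?_ ?_ ?_
  · rintro (_ | x) _
    · exact Cn.singleton _
    · exact (hψc x).some
  · rintro (_ | x) (_ | y) hxy hx hy
    · exact absurd rfl hxy
    · simp
    · simp
    · show Disjoint (some '' ψ x) (some '' ψ y)
      rw [Set.disjoint_image_iff (Option.some_injective _)]
      exact hψd x y (fun e => hxy (by rw [e])) (hin x hx) (hin y hy)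
  · rintro (_ | x) (_ | y) hxy
    · exact absurd hxy id
    · exact ⟨_, rfl, _, ⟨y, hself y, rfl⟩, hxy.1⟩
    · exact ⟨_, ⟨x, hself x, rfl⟩, _, rfl, hxy.1⟩
    · rcases hxy with h | ⟨hx, hy, hne⟩
      · exact ⟨_, ⟨x, hself x, rfl⟩, _, ⟨y, hself y, rfl⟩, Or.inl ⟨hKS h.1, hKS h.2.1, h.2.2⟩⟩
      · obtain ⟨a, ha, h⟩ := huw'
        rw [hS] at hx hy
        rcases hx with rfl | hx <;> rcases hy with hy | hy
        · exact absurd hy.symm hne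
        · rw [Set.mem_singleton_iff] at hy
          subst hy
          exact ⟨_, ⟨a, ha, rfl⟩, _, ⟨y, hself y, rfl⟩, h⟩
        · rw [Set.mem_singleton_iff] at hx
          subst hx hy
          exact ⟨_, ⟨x, hself x, rfl⟩, _, ⟨a, ha, rfl⟩, h.symm⟩
        · rw [Set.mem_singleton_iff] at hx hy
          exact absurd (hx.trans hy.symm) hne

lemma good_empty (B R : Set V) : Good G σ ∅ B R := by
  refine ⟨⊥, 0, ⟨?_, ?_, ?_, ?_, ?_, ?_, ?_, ?_, ?_⟩⟩
  · intro x y h; exact absurd h (by simp)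
  · intro x y z h; exact absurd h (by simp)
  · intro x _ y h; exact absurd h (by simp)
  · intro x _; rfl
  · intro x _; rfl
  · intro x _; simp
  · intro x _ y h; exact absurd h (by simp)
  · intro x; simp
  · classical
    unfold signedGraphPoly
    rw [Finset.filter_false_of_mem]
    · simp
    · rintro p _ ⟨h, _⟩
      exact h.1.2.1

lemma good_unroot (W B : Set V) (b : V) (h : Good G σ W B {b}) : Good G σ W B ∅ := by
  obtain ⟨M, η, h⟩ := h
  refine ⟨M, η, ⟨h.sub, h.mat, fun x hx => absurd hx (Set.notMem_empty _), h.outside,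
    fun x hx => absurd hx (Set.notMem_empty _), h.two, h.one, h.three, ?_⟩⟩
  have e : eg G W ∅ M = eg G W {b} M := by
    ext x y
    rw [eg_adj, eg_adj]
    constructor
    · rintro ⟨⟨h1, h2, h3, _⟩, h5⟩
      refine ⟨⟨h1, h2, h3, ?_⟩, h5⟩
      rintro ⟨hx, hy⟩
      rw [Set.mem_singleton_iff] at hx hy
      exact h1.ne (hx.trans hy.symm)
    · rintro ⟨⟨h1, h2, h3, _⟩, h5⟩
      exact ⟨⟨h1, h2, h3, by simp⟩, h5⟩
  rw [e]; exact h.ne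

lemma good_sep (W B R : Set V) (hBW : B ⊆ W) (hRB : R ⊆ B) (hP : (cone (base G W R) B).IsPlanar)
    (hR2 : R.ncard ≤ 2)
    (ih : ∀ W' B' R' : Set V, W'.ncard < W.ncard → B' ⊆ W' → R' ⊆ B' → R'.ncard ≤ 2 →
      (cone (base G W' R') B').IsPlanar → Good G σ W' B' R')
    (S : Set V) (hSB : S ⊆ B) (hS2 : S.ncard ≤ 2) (p q : V) (hp : p ∈ W \ S) (hq : q ∈ W \ S)
    (hpq : ¬ Rch (base G W R) (W \ S) p q)
    (hpR : ∀ x ∈ R, ¬ Rch (base G W R) (W \ S) p x)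
    (hmin : ∀ S' ⊆ B, S'.ncard < S.ncard → ∀ x ∈ W \ S', ∀ y ∈ W \ S',
      Rch (base G W R) (W \ S') x y) : Good G σ W B R := by
  set Γ := base G W R with hΓ
  set K := comp Γ (W \ S) p with hKdef
  set K' := comp Γ (W \ S) q with hK'def
  have hpK : p ∈ K := Rch.refl p
  have hKsub : K ⊆ W \ S := fun y hy => Rch.mem hy hp
  have hK'sub : K' ⊆ W \ S := fun y hy => Rch.mem hy hq
  have hKK' : ∀ x ∈ K, x ∉ K' := fun x hx hx' => hpq (Rch.trans hx (Rch.symm hx'))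
  have hKW : K ⊆ W := fun x hx => (hKsub hx).1
  have hSW : S ⊆ W := hSB.trans hBW
  have hKS : Disjoint K S := Set.disjoint_left.2 fun x hx hs => (hKsub hx).2 hs
  have hRK : Disjoint R K := Set.disjoint_left.2 fun x hx hk => hpR x hx hk
  have hRK' : ∀ x ∈ R, x ∉ K := fun x hx hk => hpR x hx hk
  have hKSW : K ∪ S ⊆ W := Set.union_subset hKW hSW
  have hqKS : q ∉ K ∪ S := by
    rintro (h | h)
    · exact hpq h
    · exact hq.2 h
  refine gluing G σ W B R K S hBW hRB hKW hKS hSB hRK ?_ ?_ ?_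
  · intro x hx y hy hxy
    by_cases hyS : y ∈ S
    · exact Or.inr hyS
    · exact Or.inl (Rch.step hx (hKsub hx) ⟨hy, hyS⟩ (Or.inl ⟨hKW hx, hy, hxy⟩))
  · refine ih _ _ _ ?_ ?_ ?_ hR2 ?_
    · refine Set.ncard_lt_ncard ⟨Set.sdiff_subset, fun h => ?_⟩ (Set.toFinite _)
      exact (h hp.1).2 hpK
    · exact fun x hx => ⟨hBW hx.1, hx.2⟩
    · exact fun x hx => ⟨hRB hx, hRK' x hx⟩
    · refine planar_sub hP ?_ Set.sdiff_subset
      rintro x y (h | h)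
      · exact Or.inl ⟨h.1.1, h.2.1.1, h.2.2⟩
      · exact Or.inr h
  · refine ih _ _ _ ?_ Set.inter_subset_right (fun x hx => ⟨hSB hx, Or.inr hx⟩) hS2 ?_
    · refine Set.ncard_lt_ncard ⟨hKSW, fun h => hqKS (h hq.1)⟩ (Set.toFinite _)
    · by_cases hS1 : S.ncard ≤ 1
      · refine planar_sub hP ?_ Set.inter_subset_left
        rintro x y (h | h)
        · exact Or.inl ⟨hKSW h.1, hKSW h.2.1, h.2.2⟩
        · exact absurd ((Set.ncard_le_one (Set.toFinite _)).1 hS1 x h.1 y h.2.1) h.2.2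
      · obtain ⟨u, w, huw, hS⟩ := Set.ncard_eq_two.1 (by omega : S.ncard = 2)
        have att : ∀ s ∈ S, ∃ y ∈ K', Γ.Adj y s := by
          intro s hs
          by_contra! hno
          have hlt : (S \ {s}).ncard < S.ncard :=
            Set.ncard_lt_ncard ⟨Set.sdiff_subset, fun h => (h hs).2 rfl⟩ (Set.toFinite _)
          have hr := hmin (S \ {s}) (Set.sdiff_subset.trans hSB) hlt q
            ⟨hq.1, fun h => hq.2 h.1⟩ p ⟨hp.1, fun h => hp.2 h.1⟩
          have := hr.closed K' (Rch.refl q) (by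
            intro a b ha _ hb hab
            have hbS : b ∉ S := by
              intro h
              have hbs : b = s := by
                by_contra hne
                exact hb.2 ⟨h, hne⟩
              exact hno a ha (hbs ▸ hab)
            exact Rch.step ha (hK'sub ha) ⟨hb.1, hbS⟩ hab)
          exact hKK' p hpK this
        refine planar_glue G W B R K S K' u w huw hS hKSW ?_ hP comp_cn
          (att u (by simp [hS])) (att w (by simp [hS]))
        rw [Set.disjoint_left]
        rintro a ha (h | h)
        · exact hKK' a h ha
        · exact (hK'sub ha).2 h

lemma good_all (hσ : ∀ e, σ e = 1 ∨ σ e = -1) (n : ℕ) : ∀ W B R : Set V, W.ncard = n → B ⊆ W →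
    R ⊆ B → R.ncard ≤ 2 → (cone (base G W R) B).IsPlanar → Good G σ W B R := by
  induction n using Nat.strong_induction_on with
  | _ n ih =>
  have rootCase : ∀ W B R : Set V, W.ncard = n → R ⊆ W → R.ncard ≤ 2 → B = R →
      (cone (base G W R) B).IsPlanar → ∀ r ∈ W, (r ∈ R ∨ R = ∅) → Good G σ W B R := by
    intro W B R hn hRW hR2 hBR hP r hr hrR
    refine removeRoot G σ hσ W B R hRW hBR r hr hrR ?_
    refine ih _ ?_ _ _ _ rfl ?_ ?_ ?_ (planar_root G W B R hRW hP r hr hrR)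
    · rw [← hn]
      exact Set.ncard_lt_ncard ⟨Set.sdiff_subset, fun h => (h hr).2 rfl⟩ (Set.toFinite _)
    · rintro x (h | h)
      · exact h.1
      · exact ⟨hRW h.1, h.2⟩
    · exact Set.subset_union_right
    · exact (Set.ncard_le_ncard Set.sdiff_subset (Set.toFinite _)).trans hR2
  have A : ∀ W B R : Set V, W.ncard = n → B ⊆ W → R ⊆ B → R.ncard ≤ 2 → R.Nonempty →
      (cone (base G W R) B).IsPlanar → Good G σ W B R := by
    intro W B R hn hBW hRB hR2 hRne hP
    rcases Set.eq_empty_or_nonempty (B \ R) with hBR | hBR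
    · obtain ⟨r, hr⟩ := hRne
      exact rootCase W B R hn (hRB.trans hBW) hR2
        (Set.Subset.antisymm (Set.sdiff_eq_empty.1 hBR) hRB) hP r (hBW (hRB hr)) (Or.inl hr)
    by_cases hN : ∀ S ⊆ B, S.ncard ≤ 2 → ∀ x ∈ W \ S, ∀ y ∈ W \ S, Rch (base G W R) (W \ S) x y
    · obtain ⟨v, hv, h1, h2⟩ := structure_lemma (base G W R) W B R hBW hRB hP hRne hBR hN
      have hadj : ∀ y ∈ B, G.Adj v y → (base G W R).Adj v y :=
        fun y hy h => Or.inl ⟨hBW hv.1, hBW hy, h⟩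
      refine removeVertex G σ hσ W B R hBW hRB v hv.1 hv.2 ?_ ?_ ?_
      · refine le_trans (Set.ncard_le_ncard ?_ (Set.toFinite _)) h1
        exact fun y hy => ⟨hy.1, hadj y hy.1.1 hy.2⟩
      · refine le_trans (Set.ncard_le_ncard ?_ (Set.toFinite _)) h2
        exact fun y hy => ⟨hy.1, hadj y hy.1 hy.2⟩
      · refine ih _ ?_ _ _ _ rfl ?_ ?_ hR2 (planar_vertex G W B R hBW hP v hv.1 hv.2)
        · rw [← hn]
          exact Set.ncard_lt_ncard ⟨Set.sdiff_subset, fun h => (h (hBW hv.1)).2 rfl⟩ (Set.toFinite _)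
        · rintro x (h | h)
          · exact ⟨h.1, fun e => by
              rw [Set.mem_singleton_iff] at e
              exact h.2.ne e.symm⟩
          · exact ⟨hBW h.1, h.2⟩
        · exact fun x hx => Or.inr ⟨hRB hx, fun e => hv.2 (e ▸ hx)⟩
    · let bad : Set (Set V) := {S | S ⊆ B ∧ S.ncard ≤ 2 ∧ ∃ x ∈ W \ S, ∃ y ∈ W \ S,
        ¬ Rch (base G W R) (W \ S) x y}
      have hbad : bad.Nonempty := by
        push Not at hN
        obtain ⟨S, h1, h2, x, hx, y, hy, h⟩ := hN
        exact ⟨S, h1, h2, x, hx, y, hy, h⟩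
      obtain ⟨S, ⟨hSB, hS2, x, hx, y, hy, hxy⟩, hmin⟩ :=
        WellFounded.has_min (measure (fun S : Set V => S.ncard)).wf bad hbad
      have hmin' : ∀ S' ⊆ B, S'.ncard < S.ncard → ∀ x ∈ W \ S', ∀ y ∈ W \ S',
          Rch (base G W R) (W \ S') x y := by
        intro S' hS' hlt a ha b hb
        by_contra hab
        exact hmin S' ⟨hS', by omega, a, ha, b, hb, hab⟩ hlt
      have ih' : ∀ W' B' R' : Set V, W'.ncard < W.ncard → B' ⊆ W' → R' ⊆ B' → R'.ncard ≤ 2 →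
          (cone (base G W' R') B').IsPlanar → Good G σ W' B' R' :=
        fun W' B' R' h => ih _ (hn ▸ h) W' B' R' rfl
      by_cases hxR : ∀ r ∈ R, ¬ Rch (base G W R) (W \ S) x r
      · exact good_sep G σ W B R hBW hRB hP hR2 ih' S hSB hS2 x y hx hy hxy hxR hmin'
      · push Not at hxR
        obtain ⟨r, hr, hxr⟩ := hxR
        refine good_sep G σ W B R hBW hRB hP hR2 ih' S hSB hS2 y x hy hx (fun h => hxy h.symm) ?_ hmin'
        intro r' hr' hyr'
        apply hxy
        refine hxr.trans (Rch.trans ?_ hyr'.symm)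
        by_cases e : r = r'
        · rw [e]; exact Rch.refl _
        · exact Rch.single (hxr.mem hx) (hyr'.mem hy) (Or.inr ⟨hr, hr', e⟩)
  intro W B R hn hBW hRB hR2 hP
  rcases Set.eq_empty_or_nonempty R with rfl | hRne
  · rcases Set.eq_empty_or_nonempty B with rfl | ⟨b, hb⟩
    · rcases Set.eq_empty_or_nonempty W with rfl | ⟨r, hr⟩
      · exact good_empty G σ _ _
      · exact rootCase W ∅ ∅ hn (Set.empty_subset _) hR2 rfl hP r hr (Or.inr rfl)
    · apply good_unroot G σ W B b
      refine A W B {b} hn hBW (by simpa using hb) (by simp) ⟨b, rfl⟩ ?_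
      refine planar_sub hP ?_ Set.Subset.rfl
      rintro x y (h | ⟨h1, h2, h3⟩)
      · exact Or.inl h
      · rw [Set.mem_singleton_iff] at h1 h2
        exact absurd (h1.trans h2.symm) h3
  · exact A W B R hn hBW hRB hR2 hRne hP

lemma final (hG : G.IsPlanar) (hσ : ∀ e, σ e = 1 ∨ σ e = -1) :
    ∃ M : G.Subgraph, M.IsMatching ∧
      ∃ η : V →₀ ℕ, (∀ v, η v ≤ 3) ∧
        MvPolynomial.coeff η (signedGraphPoly (G.deleteEdges M.edgeSet) σ) ≠ 0 := by
  have hP : (cone (base G Set.univ ∅) ∅).IsPlanar := by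
    have hadj : ∀ x y, (cone (base G Set.univ ∅) ∅).Adj x y →
        ∃ a b, x = some a ∧ y = some b ∧ G.Adj a b := by
      rintro (_ | x) (_ | y) h
      · exact absurd h id
      · exact absurd h (Set.notMem_empty _)
      · exact absurd h (Set.notMem_empty _)
      · rcases h with h | h
        · exact ⟨x, y, rfl, rfl, h.2.2⟩
        · exact absurd h.1 (Set.notMem_empty _)
    refine planar_transfer hG _ (fun x => {a | x = some a}) ?_ ?_ ?_
    · rintro x ⟨y, h⟩
      obtain ⟨a, b, rfl, rfl, h⟩ := hadj _ _ h
      convert Cn.singleton a using 1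
      ext z
      simp [eq_comm]
    · intro x y hxy _ _
      rw [Set.disjoint_left]
      intro a ha hb
      exact hxy (Eq.trans ha (Eq.symm hb))
    · intro x y h
      obtain ⟨a, b, rfl, rfl, hab⟩ := hadj _ _ h
      exact ⟨a, rfl, b, rfl, hab⟩
  obtain ⟨M, η, h⟩ := good_all G σ hσ _ Set.univ ∅ ∅ rfl (Set.empty_subset _)
    (Set.empty_subset _) (by simp) hP
  let N : G.Subgraph :=
    { verts := {x | ∃ y, M.Adj x y}
      Adj := M.Adj
      adj_sub := fun {x y} hxy => (h.sub x y hxy).1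
      edge_vert := fun {x y} hxy => ⟨y, hxy⟩
      symm := ⟨fun x y hxy => hxy.symm⟩ }
  refine ⟨N, ?_, η, h.three, ?_⟩
  · rintro x ⟨y, hy⟩
    exact ⟨y, hy, fun z hz => h.mat x z y hz hy⟩
  · have e : G.deleteEdges N.edgeSet = eg G Set.univ ∅ M := by
      ext x y
      rw [SimpleGraph.deleteEdges_adj, eg_adj, SimpleGraph.Subgraph.mem_edgeSet]
      show G.Adj x y ∧ ¬ M.Adj x y ↔ _
      simp
    rw [e]; exact h.ne

end induction

end ATM

theorem stmt_16 {V : Type*} [Fintype V] [LinearOrder V] (G : SimpleGraph V)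
    (hG : G.IsPlanar) (σ : Sym2 V → ℤ) (hσ : ∀ e, σ e = 1 ∨ σ e = -1) :
    ∃ M : G.Subgraph, M.IsMatching ∧
      ∃ η : V →₀ ℕ, (∀ v, η v ≤ 3) ∧
        MvPolynomial.coeff η (signedGraphPoly (G.deleteEdges M.edgeSet) σ) ≠ 0 := by
  exact ATM.final G σ hG hσ
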